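/- arXiv:2203.09146 — 3 statements merged into one kernel-verified Lean document; each statement's English description precedes it below -/
import Mathlib

section
/- Let ν, τ, ρ > 0, M ≥ 0, and let ω ∈ ℝ^d satisfy the Diophantine condition of type (ν,τ). Let Q: ℝ^d → ℝ be a continuous ℤ^d-periodic function with zero average (Q̂(0) = 0) whose Fourier coefficients satisfy |Q̂(k)| ≤ M·e^{−2πρ|k|} for all k ∈ ℤ^d. Then there exists a unique continuous ℤ^d-periodic function W: ℝ^d → ℝ with zero average solving the cohomology equation W(θ) − W(θ+ω) = Q(θ) for all θ ∈ ℝ^d; moreover, there is a constant C depending only on d and τ such that sup_{θ∈ℝ^d} |W(θ)| ≤ C·ν^{−1}·ρ^{−(τ+d)}·M. -/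
/-!
The solution is the Fourier series `U(θ) = ∑ Q̂(k) / (1 - e^{2πi k·ω}) e^{2πi k·θ}` over `k ≠ 0`.
Since `|1 - e^{2πix}| ≥ 4 dist(x, ℤ)`, the Diophantine condition bounds its coefficients by
`M / (4ν) · |k|^τ e^{-2πρ|k|}`, and `sum_small_divisor_le` shows that these sum to at most a
constant times `ν⁻¹ ρ^{-(τ+d)} M`. Hence `U` converges uniformly, and the equation holds because
`Q` is the sum of its own Fourier series. The real part of `U`, minus its average, is the required
`W`; subtracting the average at most doubles the sup bound, which the factor `1/4` absorbs.

For uniqueness, the difference of two solutions is invariant under translation by `ω`. Its Fourier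
coefficients therefore satisfy `(1 - e^{-2πi k·ω}) V̂(k) = 0`, so they all vanish, and a continuous
function with vanishing Fourier coefficients is zero (`eq_zero_of_invariant`).

The Fourier theory comes from `UnitAddTorus`; `exists_torus_lift` identifies `fourierCoef` with
`UnitAddTorus.mFourierCoeff` of the function induced on the torus.
-/

open scoped BigOperators
open MeasureTheory

/-- Fourier coefficient `Q̂(k) = ∫_{[0,1]^d} Q(θ) e^{−2πi k·θ} dθ` of a
`ℤ^d`-periodic function `Q : ℝ^d → ℝ`. -/
noncomputable def fourierCoef {d : ℕ} (Q : (Fin d → ℝ) → ℝ) (k : Fin d → ℤ) : ℂ :=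
  ∫ θ in Set.Icc (0 : Fin d → ℝ) 1,
    (Q θ : ℂ) * Complex.exp (-(2 * (Real.pi : ℂ) * Complex.I) * ∑ i, (k i : ℂ) * (θ i : ℂ))


/-! ### The small-divisor sum -/

open Real in
/-- From `x ≤ s e^{x/s}` with `x = ρ n`, half of the exponential decay absorbs the power `n ^ s`. -/
lemma rpow_mul_exp_le {s ρ n : ℝ} (hs : 0 < s) (hρ : 0 < ρ) (hn : 0 ≤ n) :
    n ^ s * exp (-(2 * π * ρ) * n) ≤ s ^ s * ρ ^ (-s) * exp (-ρ * n) := by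
  have h1 : ρ * n ≤ s * exp (ρ * n / s) := by
    have := add_one_le_exp (ρ * n / s)
    calc ρ * n = s * (ρ * n / s) := by field_simp
      _ ≤ _ := by gcongr; linarith
  have h2 : (ρ * n) ^ s ≤ s ^ s * exp (ρ * n) := by
    calc (ρ * n) ^ s ≤ (s * exp (ρ * n / s)) ^ s := by gcongr
      _ = _ := by
        rw [mul_rpow hs.le (exp_pos _).le, ← exp_mul]
        congr 2; field_simp
  rw [mul_rpow hρ.le hn] at h2
  have h3 : n ^ s ≤ s ^ s * ρ ^ (-s) * exp (ρ * n) := by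
    rw [rpow_neg hρ.le]
    have : 0 < ρ ^ s := by positivity
    calc n ^ s = (ρ ^ s * n ^ s) * (ρ ^ s)⁻¹ := by field_simp
      _ ≤ (s ^ s * exp (ρ * n)) * (ρ ^ s)⁻¹ := by gcongr
      _ = _ := by ring
  have h4 : exp (-(2 * π * ρ) * n) ≤ exp (-(2 * ρ) * n) := by
    apply exp_le_exp.2
    have := mul_nonneg hρ.le hn
    nlinarith [pi_gt_three]
  calc _ ≤ (s ^ s * ρ ^ (-s) * exp (ρ * n)) * exp (-(2 * ρ) * n) := by gcongr
    _ = _ := by rw [mul_assoc, ← exp_add]; ring_nf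

open Real in
lemma sum_int_exp_le {a : ℝ} (ha : 0 < a) (F : Finset ℤ) :
    ∑ n ∈ F, exp (-a * |(n : ℝ)|) ≤ 1 + 2 / a := by
  set r := exp (-a) with hr
  have hr0 : 0 < r := exp_pos _
  have hr1 : r < 1 := by rw [hr, exp_lt_one_iff]; linarith
  have hg := hasSum_geometric_of_lt_one hr0.le hr1
  have hs : HasSum (fun n : ℤ => exp (-a * |(n : ℝ)|)) ((1 - r)⁻¹ + r * (1 - r)⁻¹) := by
    apply HasSum.of_nat_of_neg_add_one
    · convert hg using 2 with n
      rw [hr, ← exp_nat_mul]; simp; ring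
    · convert! hg.mul_left r using 2 with n
      rw [← pow_succ', hr, ← exp_nat_mul]
      push_cast
      rw [abs_neg, abs_of_nonneg (by positivity)]; ring_nf
  refine (sum_le_hasSum F (fun _ _ => (exp_pos _).le) hs).trans ?_
  -- `a r ≤ 1 - r`, that is `1 + a ≤ exp a`
  have key : a * r ≤ 1 - r := by
    have := add_one_le_exp a
    have h : exp a * r = 1 := by rw [hr, ← exp_add]; simp
    nlinarith
  have h1 : 0 < 1 - r := by linarith
  rw [show (1 - r)⁻¹ + r * (1 - r)⁻¹ = 1 + 2 * (r / (1 - r)) by field_simp; ring,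
    show 2 / a = 2 * (1 / a) by ring]
  gcongr 1 + 2 * ?_
  rw [div_le_div_iff₀ h1 ha]; linarith

open Real in
lemma sum_pi_exp_le {d : ℕ} {a : ℝ} (ha : 0 < a) (F : Finset (Fin d → ℤ)) :
    ∑ k ∈ F, exp (-a * ∑ i, |(k i : ℝ)|) ≤ (1 + 2 / a) ^ d := by
  classical
  have hsub : F ⊆ Fintype.piFinset fun i => F.image (fun k : Fin d → ℤ => k i) := by
    intro k hk
    rw [Fintype.mem_piFinset]
    exact fun i => Finset.mem_image_of_mem _ hk
  calc ∑ k ∈ F, exp (-a * ∑ i, |(k i : ℝ)|)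
      ≤ ∑ k ∈ Fintype.piFinset fun i => F.image (fun k : Fin d → ℤ => k i),
          exp (-a * ∑ i, |(k i : ℝ)|) :=
        Finset.sum_le_sum_of_subset_of_nonneg hsub fun _ _ _ => (exp_pos _).le
    _ = ∏ i : Fin d, ∑ n ∈ F.image (fun k : Fin d → ℤ => k i), exp (-a * |(n : ℝ)|) := by
        rw [Finset.prod_univ_sum]
        refine Finset.sum_congr rfl fun k _ => ?_
        rw [Finset.mul_sum, exp_sum]
    _ ≤ ∏ i : Fin d, (1 + 2 / a) := by
        refine Finset.prod_le_prod (fun i _ => Finset.sum_nonneg fun _ _ => (exp_pos _).le)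
          fun i _ => sum_int_exp_le ha _
    _ = _ := by simp

open Real in
/-- The small-divisor sum `∑ |k|^τ e^{-2πρ|k|}` is `O(ρ^{-(τ+d)})`, uniformly in `ρ > 0`. For
`ρ ≤ 1` the factor `ρ^{-d}` comes from the number of relevant `k`; for `ρ ≥ 1` it comes from
`|k|^τ ≤ |k|^{τ+d}`, valid since `|k|` is an integer and `τ > 0`. -/
lemma sum_small_divisor_le {d : ℕ} {τ ρ : ℝ} (hτ : 0 < τ) (hρ : 0 < ρ)
    (F : Finset (Fin d → ℤ)) :
    ∑ k ∈ F, (∑ i, |(k i : ℝ)|) ^ τ * exp (-(2 * π * ρ) * ∑ i, |(k i : ℝ)|) ≤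
      (τ ^ τ + (τ + d) ^ (τ + d)) * 3 ^ d * ρ ^ (-(τ + (d : ℝ))) := by
  have hs : 0 < τ + d := by positivity
  have hA : 0 < τ ^ τ := by positivity
  have hB : 0 < (τ + d) ^ (τ + d) := by positivity
  have hR : 0 < ρ ^ (-(τ + (d : ℝ))) := by positivity
  have hn : ∀ k : Fin d → ℤ, 0 ≤ ∑ i, |(k i : ℝ)| := fun k =>
    Finset.sum_nonneg fun _ _ => abs_nonneg _
  rcases le_total ρ 1 with h | h
  · calc _ ≤ ∑ k ∈ F, τ ^ τ * ρ ^ (-τ) * exp (-ρ * ∑ i, |(k i : ℝ)|) :=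
          Finset.sum_le_sum fun k _ => rpow_mul_exp_le hτ hρ (hn k)
      _ ≤ τ ^ τ * ρ ^ (-τ) * (1 + 2 / ρ) ^ d := by
          rw [← Finset.mul_sum]; gcongr; exact sum_pi_exp_le hρ F
      _ ≤ τ ^ τ * ρ ^ (-τ) * (3 * ρ⁻¹) ^ d := by
          gcongr
          have : 1 ≤ ρ⁻¹ := (one_le_inv₀ hρ).2 h
          rw [div_eq_mul_inv]; linarith
      _ = τ ^ τ * 3 ^ d * ρ ^ (-(τ + (d : ℝ))) := by
          rw [neg_add, rpow_add hρ, rpow_neg hρ.le (d : ℝ), rpow_natCast, mul_pow, inv_pow]; ring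
      _ ≤ _ := by gcongr; linarith
  · have hpow : ∀ k : Fin d → ℤ,
        (∑ i, |(k i : ℝ)|) ^ τ ≤ (∑ i, |(k i : ℝ)|) ^ (τ + d) := by
      intro k
      rcases (hn k).eq_or_lt with h0 | h0
      · rw [← h0, zero_rpow hτ.ne', zero_rpow hs.ne']
      · refine rpow_le_rpow_of_exponent_le ?_ (by simp)
        have : (∑ i, |(k i : ℝ)|) = ((∑ i, |k i| : ℤ) : ℝ) := by push_cast; rfl
        rw [this] at h0 ⊢
        exact_mod_cast h0
    calc _ ≤ ∑ k ∈ F, (τ + d) ^ (τ + d) * ρ ^ (-(τ + (d : ℝ))) *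
            exp (-1 * ∑ i, |(k i : ℝ)|) := by
          refine Finset.sum_le_sum fun k _ => ?_
          refine (mul_le_mul_of_nonneg_right (hpow k) (exp_pos _).le).trans ?_
          refine (rpow_mul_exp_le hs hρ (hn k)).trans ?_
          gcongr
      _ ≤ (τ + d) ^ (τ + d) * ρ ^ (-(τ + (d : ℝ))) * (1 + 2 / 1) ^ d := by
          rw [← Finset.mul_sum]; gcongr; exact sum_pi_exp_le one_pos F
      _ = (τ + d) ^ (τ + d) * 3 ^ d * ρ ^ (-(τ + (d : ℝ))) := by norm_num; ring
      _ ≤ _ := by gcongr; linarith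

/-! ### Characters and small divisors -/

/-- The character `θ ↦ e^{2πi k·θ}` of `ℝ^d`. -/
noncomputable def planeWave {d : ℕ} (k : Fin d → ℤ) (θ : Fin d → ℝ) : ℂ :=
  Complex.exp (2 * (Real.pi : ℂ) * Complex.I * ∑ i, (k i : ℂ) * (θ i : ℂ))

lemma planeWave_eq_exp_ofReal {d : ℕ} (k : Fin d → ℤ) (θ : Fin d → ℝ) :
    planeWave k θ = Complex.exp (Complex.I * ((2 * Real.pi * ∑ i, (k i : ℝ) * θ i : ℝ) : ℂ)) := by
  unfold planeWave; push_cast; ring_nf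

lemma norm_planeWave {d : ℕ} (k : Fin d → ℤ) (θ : Fin d → ℝ) : ‖planeWave k θ‖ = 1 := by
  rw [planeWave_eq_exp_ofReal, Complex.norm_exp_I_mul_ofReal]

lemma planeWave_add {d : ℕ} (k : Fin d → ℤ) (θ η : Fin d → ℝ) :
    planeWave k (θ + η) = planeWave k θ * planeWave k η := by
  unfold planeWave
  rw [← Complex.exp_add, ← mul_add, ← Finset.sum_add_distrib]
  simp [mul_add]

lemma planeWave_int {d : ℕ} (k m : Fin d → ℤ) : planeWave k (fun i => (m i : ℝ)) = 1 := by
  unfold planeWave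
  rw [Complex.exp_eq_one_iff]
  exact ⟨∑ i, k i * m i, by push_cast; ring⟩

lemma continuous_planeWave {d : ℕ} (k : Fin d → ℤ) : Continuous (planeWave k) := by
  unfold planeWave; fun_prop

lemma mFourier_coe {d : ℕ} (k : Fin d → ℤ) (θ : Fin d → ℝ) :
    UnitAddTorus.mFourier k (fun i => (θ i : UnitAddCircle)) = planeWave k θ := by
  simp only [UnitAddTorus.mFourier, ContinuousMap.coe_mk, fourier_coe_apply, planeWave]
  rw [← Complex.exp_sum, Finset.mul_sum]
  congr 1
  refine Finset.sum_congr rfl fun i _ => ?_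
  push_cast; ring

/-- `|1 - e^{2πix}| = 2|sin πx| ≥ 4 dist(x, ℤ)`. -/
lemma four_mul_le_norm_one_sub_planeWave {d : ℕ} (k : Fin d → ℤ) (ω : Fin d → ℝ) {δ : ℝ}
    (h : ∀ n : ℤ, δ ≤ |(∑ i, (k i : ℝ) * ω i) - (n : ℝ)|) :
    4 * δ ≤ ‖1 - planeWave k ω‖ := by
  set x := ∑ i, (k i : ℝ) * ω i with hx
  rw [norm_sub_rev, planeWave_eq_exp_ofReal, ← hx, Complex.norm_exp_I_mul_ofReal_sub_one,
    norm_mul, Real.norm_two, Real.norm_eq_abs]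
  have h1 : |Real.sin (2 * Real.pi * x / 2)| = |Real.sin (Real.pi * (x - round x))| := by
    rw [show Real.pi * (x - round x) = 2 * Real.pi * x / 2 - round x * Real.pi by ring,
      Real.sin_sub_int_mul_pi, abs_mul, abs_zpow, abs_neg, abs_one, one_zpow, one_mul]
  have hpi := Real.pi_pos
  have h2 : |Real.pi * (x - round x)| ≤ Real.pi / 2 := by
    rw [abs_mul, abs_of_pos hpi]
    nlinarith [abs_sub_round x]
  have h3 := Real.mul_abs_le_abs_sin h2
  rw [abs_mul, abs_of_pos hpi,
    show 2 / Real.pi * (Real.pi * |x - round x|) = 2 * |x - round x| by field_simp] at h3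
  have := h (round x)
  rw [h1]; linarith

/-! ### Periodic functions and the torus -/

/-- A continuous periodic function on `ℝ^d` descends to the torus, and its Fourier coefficients
are those of the descended function. -/
lemma exists_torus_lift {d : ℕ} (Q : (Fin d → ℝ) → ℝ) (hQ : Continuous Q)
    (hper : ∀ (θ : Fin d → ℝ) (k : Fin d → ℤ), Q (θ + fun i => (k i : ℝ)) = Q θ) :
    ∃ f : C(UnitAddTorus (Fin d), ℂ),
      (∀ θ : Fin d → ℝ, f (fun i => (θ i : UnitAddCircle)) = (Q θ : ℂ)) ∧
      ∀ k, UnitAddTorus.mFourierCoeff f k = fourierCoef Q k := by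
  have hq : IsOpenQuotientMap
      (Pi.map (fun (_ : Fin d) (x : ℝ) => (x : UnitAddCircle))) :=
    IsOpenQuotientMap.piMap fun _ => QuotientAddGroup.isOpenQuotientMap_mk
  let π : C(Fin d → ℝ, UnitAddTorus (Fin d)) := ⟨_, hq.continuous⟩
  have hπ : Topology.IsQuotientMap π := hq.isQuotientMap
  have hfac : Function.FactorsThrough (⟨fun θ => (Q θ : ℂ), by fun_prop⟩ : C(Fin d → ℝ, ℂ)) π := by
    intro a b hab
    have : ∀ i, ∃ n : ℤ, b i + n = a i := by
      intro i
      have hi : ((a i : ℝ) : UnitAddCircle) = b i := congrFun hab i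
      rw [← sub_eq_zero, ← AddCircle.coe_sub, AddCircle.coe_eq_zero_iff] at hi
      obtain ⟨n, hn⟩ := hi
      rw [zsmul_eq_mul, mul_one] at hn
      exact ⟨n, by rw [hn]; ring⟩
    choose n hn using this
    have : a = b + fun i => (n i : ℝ) := by ext i; simp [hn]
    simp [this, hper]
  have hval : ∀ θ : Fin d → ℝ, hπ.lift _ hfac (fun i => (θ i : UnitAddCircle)) = (Q θ : ℂ) :=
    fun θ => DFunLike.congr_fun (hπ.lift_comp _ hfac) θ
  refine ⟨hπ.lift _ hfac, hval, fun k => ?_⟩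
  rw [UnitAddTorus.mFourierCoeff_eq_integral _ k 0, fourierCoef]
  have hset : {x : Fin d → ℝ | ∀ i, x i ∈ Set.Ioc ((0 : Fin d → ℝ) i) ((0 : Fin d → ℝ) i + 1)} =
      Set.univ.pi fun i => Set.Ioc ((0 : Fin d → ℝ) i) ((1 : Fin d → ℝ) i) := by
    ext x; simp
  rw [hset, volume_pi, setIntegral_congr_set Measure.univ_pi_Ioc_ae_eq_Icc]
  refine integral_congr_ae (Filter.Eventually.of_forall fun θ => ?_)
  simp only [hval, mFourier_coe, planeWave, smul_eq_mul]
  rw [mul_comm]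
  congr 2
  simp

/-- Rotation acts on Fourier coefficients by a phase, so a rotation-invariant function has no
Fourier modes except the resonant ones; if only `k = 0` is resonant and the average is zero, it
vanishes. -/
lemma eq_zero_of_invariant {d : ℕ} (ω : Fin d → ℝ)
    (hω : ∀ k : Fin d → ℤ, k ≠ 0 → planeWave k ω ≠ 1)
    (V : (Fin d → ℝ) → ℝ) (hV : Continuous V)
    (hper : ∀ (θ : Fin d → ℝ) (k : Fin d → ℤ), V (θ + fun i => (k i : ℝ)) = V θ)
    (h0 : fourierCoef V 0 = 0) (hinv : ∀ θ, V (θ + ω) = V θ) : ∀ θ, V θ = 0 := by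
  obtain ⟨f, hf, hcoef⟩ := exists_torus_lift V hV hper
  have hsurj : ∀ t : UnitAddTorus (Fin d), ∃ θ : Fin d → ℝ, (fun i => (θ i : UnitAddCircle)) = t := by
    intro t
    choose θ hθ using fun i => QuotientAddGroup.mk_surjective (t i)
    exact ⟨θ, funext hθ⟩
  set w : UnitAddTorus (Fin d) := fun i => (ω i : UnitAddCircle) with hw
  have hadd : ∀ θ : Fin d → ℝ, (fun i => (θ i : UnitAddCircle)) + w =
      fun i => ((θ + ω) i : UnitAddCircle) := fun θ => rfl
  have hz : ∀ k, UnitAddTorus.mFourierCoeff f k = 0 := by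
    intro k
    by_cases hk : k = 0
    · rw [hk, hcoef, h0]
    have hshift : UnitAddTorus.mFourierCoeff f k =
        planeWave (-k) ω * UnitAddTorus.mFourierCoeff f k := by
      refine (integral_add_right_eq_self
        (μ := Measure.pi fun _ : Fin d => (AddCircle.haarAddCircle : Measure UnitAddCircle))
        (fun t => UnitAddTorus.mFourier (-k) t • f t) w).symm.trans ?_
      rw [UnitAddTorus.mFourierCoeff, ← integral_const_mul]
      refine integral_congr_ae (Filter.Eventually.of_forall fun t => ?_)
      obtain ⟨θ, rfl⟩ := hsurj t
      simp only [hadd, mFourier_coe, hf, hinv, planeWave_add, smul_eq_mul]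
      ring
    have hne := hω (-k) (neg_ne_zero.2 hk)
    have : (1 - planeWave (-k) ω) * UnitAddTorus.mFourierCoeff f k = 0 := by
      linear_combination hshift
    exact (mul_eq_zero.1 this).resolve_left (sub_ne_zero.2 hne.symm)
  intro θ
  have hs : Summable (UnitAddTorus.mFourierCoeff f) := by
    rw [funext hz]; exact summable_zero
  have := UnitAddTorus.hasSum_mFourier_series_apply_of_summable hs
    (fun i => (θ i : UnitAddCircle))
  simp only [hz, zero_smul, hf] at this
  exact_mod_cast this.unique hasSum_zero

lemma fourierCoef_zero {d : ℕ} (V : (Fin d → ℝ) → ℝ) :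
    fourierCoef V 0 = ((∫ θ in Set.Icc (0 : Fin d → ℝ) 1, V θ : ℝ) : ℂ) := by
  rw [← integral_complex_ofReal]
  simp [fourierCoef]

/-- Integrals over the unit cube are averages. -/
lemma measureReal_unit_cube (d : ℕ) :
    (volume : Measure (Fin d → ℝ)).real (Set.Icc 0 1) = 1 := by
  rw [measureReal_def, Real.volume_Icc_pi_toReal (zero_le_one)]
  simp

/-- solution of the cohomology equation `W(θ) − W(θ+ω) = Q(θ)` for a
Diophantine `ω` and `Q` with zero average and exponentially decaying Fourier
coefficients, with a unique zero-average continuous periodic solution `W` satisfying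
`sup|W| ≤ C ν⁻¹ ρ^{−(τ+d)} M`, where `C = C(d,τ)`. -/
theorem cohomology_equation_solution_with_estimate
    (d : ℕ) (τ : ℝ) (hτ : 0 < τ) :
    ∃ C : ℝ, 0 < C ∧
      ∀ (ν ρ M : ℝ) (ω : Fin d → ℝ), 0 < ν → 0 < ρ → 0 ≤ M →
      (∀ k : Fin d → ℤ, k ≠ 0 → ∀ n : ℤ,
        ν * (∑ i, |(k i : ℝ)|) ^ (-τ) ≤ |(∑ i, (k i : ℝ) * ω i) - (n : ℝ)|) →
      ∀ Q : (Fin d → ℝ) → ℝ, Continuous Q →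
      (∀ (θ : Fin d → ℝ) (k : Fin d → ℤ), Q (θ + fun i => (k i : ℝ)) = Q θ) →
      fourierCoef Q 0 = 0 →
      (∀ k : Fin d → ℤ,
        ‖fourierCoef Q k‖ ≤ M * Real.exp (-(2 * Real.pi * ρ) * ∑ i, |(k i : ℝ)|)) →
      ∃ W : (Fin d → ℝ) → ℝ,
        (Continuous W ∧
          (∀ (θ : Fin d → ℝ) (k : Fin d → ℤ), W (θ + fun i => (k i : ℝ)) = W θ) ∧
          fourierCoef W 0 = 0 ∧
          (∀ θ, W θ - W (θ + ω) = Q θ)) ∧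
        (∀ W' : (Fin d → ℝ) → ℝ,
          (Continuous W' ∧
            (∀ (θ : Fin d → ℝ) (k : Fin d → ℤ), W' (θ + fun i => (k i : ℝ)) = W' θ) ∧
            fourierCoef W' 0 = 0 ∧
            (∀ θ, W' θ - W' (θ + ω) = Q θ)) → W' = W) ∧
        (∀ θ, |W θ| ≤ C * ν⁻¹ * ρ ^ (-(τ + (d : ℝ))) * M) := by
  have hC : 0 < (τ ^ τ + (τ + d) ^ (τ + d)) * 3 ^ d := by positivity
  refine ⟨_, hC, ?_⟩
  intro ν ρ M ω hν hρ hM hω Q hQ hper hQ0 hdecay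
  set B := (τ ^ τ + (τ + d) ^ (τ + d)) * 3 ^ d * ρ ^ (-(τ + (d : ℝ))) with hB
  set N : (Fin d → ℤ) → ℝ := fun k => ∑ i, |(k i : ℝ)| with hN
  have hNpos : ∀ k, k ≠ 0 → 0 < N k := by
    intro k hk
    obtain ⟨i, hi⟩ := Function.ne_iff.1 hk
    refine Finset.sum_pos' (fun _ _ => abs_nonneg _) ⟨i, Finset.mem_univ i, ?_⟩
    simpa using hi
  have hdiv : ∀ k, k ≠ 0 → 4 * (ν * N k ^ (-τ)) ≤ ‖1 - planeWave k ω‖ := fun k hk =>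
    four_mul_le_norm_one_sub_planeWave k ω (hω k hk)
  have hdivpos : ∀ k, k ≠ 0 → 0 < 4 * (ν * N k ^ (-τ)) := fun k hk => by
    have := Real.rpow_pos_of_pos (hNpos k hk) (-τ)
    positivity
  have hne : ∀ k, k ≠ 0 → planeWave k ω ≠ 1 := fun k hk h => by
    have h1 := (hdivpos k hk).trans_le (hdiv k hk)
    rw [h] at h1; simp at h1
  set g : (Fin d → ℤ) → ℝ := fun k => N k ^ τ * Real.exp (-(2 * Real.pi * ρ) * N k) with hg
  have hg0 : ∀ k, 0 ≤ g k := fun k => by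
    have : 0 ≤ N k := Finset.sum_nonneg fun _ _ => abs_nonneg _
    positivity
  have hgsum : Summable g := summable_of_sum_le hg0 (sum_small_divisor_le hτ hρ)
  have hgle : ∑' k, g k ≤ B := hgsum.tsum_le_of_sum_le (sum_small_divisor_le hτ hρ)
  -- the coefficients of the solution; the zeroth one is `0 / 0 = 0`
  set c : (Fin d → ℤ) → ℂ := fun k => fourierCoef Q k / (1 - planeWave k ω) with hc
  have hc_mul : ∀ k, c k * (1 - planeWave k ω) = fourierCoef Q k := by
    intro k
    by_cases hk : k = 0
    · simp [hc, hk, hQ0]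
    · exact div_mul_cancel₀ _ (sub_ne_zero.2 (hne k hk).symm)
  have hcle : ∀ k, ‖c k‖ ≤ M / (4 * ν) * g k := by
    intro k
    by_cases hk : k = 0
    · simp only [hc, hk, hQ0, zero_div, norm_zero]
      exact mul_nonneg (by positivity) (hg0 0)
    · calc ‖c k‖ = ‖fourierCoef Q k‖ / ‖1 - planeWave k ω‖ := norm_div _ _
        _ ≤ (M * Real.exp (-(2 * Real.pi * ρ) * N k)) / (4 * (ν * N k ^ (-τ))) :=
            div_le_div₀ (by positivity) (hdecay k) (hdivpos k hk) (hdiv k hk)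
        _ = _ := by
            have := Real.rpow_pos_of_pos (hNpos k hk) τ
            rw [Real.rpow_neg (hNpos k hk).le, hg]
            field_simp
  have hbsum : Summable fun k => M / (4 * ν) * g k := hgsum.mul_left _
  have hterm : ∀ k θ, ‖c k * planeWave k θ‖ ≤ M / (4 * ν) * g k := fun k θ => by
    rw [norm_mul, norm_planeWave, mul_one]; exact hcle k
  set U : (Fin d → ℝ) → ℂ := fun θ => ∑' k, c k * planeWave k θ with hU
  have hUsum : ∀ θ, HasSum (fun k => c k * planeWave k θ) (U θ) := fun θ =>
    (Summable.of_norm_bounded hbsum fun k => hterm k θ).hasSum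
  have hUcont : Continuous U :=
    continuous_tsum (fun k => continuous_const.mul (continuous_planeWave k)) hbsum hterm
  have hUper : ∀ (θ : Fin d → ℝ) (m : Fin d → ℤ), U (θ + fun i => (m i : ℝ)) = U θ := by
    intro θ m
    simp only [hU, planeWave_add, planeWave_int, mul_one]
  have hUle : ∀ θ, ‖U θ‖ ≤ M / (4 * ν) * B := fun θ =>
    calc ‖U θ‖ ≤ ∑' k, M / (4 * ν) * g k := tsum_of_norm_bounded hbsum.hasSum fun k => hterm k θ
      _ = M / (4 * ν) * ∑' k, g k := tsum_mul_left
      _ ≤ _ := by gcongr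
  have hUeq : ∀ θ, U θ - U (θ + ω) = Q θ := by
    intro θ
    obtain ⟨f, hf, hcoef⟩ := exists_torus_lift Q hQ hper
    have h1 : HasSum (fun k => fourierCoef Q k * planeWave k θ) (U θ - U (θ + ω)) := by
      convert! (hUsum θ).sub (hUsum (θ + ω)) using 2 with k
      rw [← hc_mul, planeWave_add]; ring
    have hs : Summable (UnitAddTorus.mFourierCoeff f) := by
      rw [funext hcoef]
      refine Summable.of_norm_bounded (hbsum.mul_right 2) fun k => ?_
      rw [← hc_mul, norm_mul]
      refine mul_le_mul (hcle k) ?_ (norm_nonneg _) (mul_nonneg (by positivity) (hg0 k))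
      refine (norm_sub_le _ _).trans ?_
      rw [norm_one, norm_planeWave]; norm_num
    have h2 := UnitAddTorus.hasSum_mFourier_series_apply_of_summable hs
      (fun i => (θ i : UnitAddCircle))
    simp only [hcoef, mFourier_coe, hf, smul_eq_mul] at h2
    exact h1.unique h2
  -- normalise the average of `Re U`
  set m : ℝ := ∫ θ in Set.Icc (0 : Fin d → ℝ) 1, (U θ).re with hm
  have hre : ∀ θ, |(U θ).re| ≤ M / (4 * ν) * B := fun θ =>
    (Complex.abs_re_le_norm _).trans (hUle θ)
  have hcontre : Continuous fun θ => (U θ).re := Complex.continuous_re.comp hUcont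
  have hmle : |m| ≤ M / (4 * ν) * B := by
    have := norm_setIntegral_le_of_norm_le_const (μ := volume) (s := Set.Icc (0 : Fin d → ℝ) 1)
      (f := fun θ => (U θ).re) isCompact_Icc.measure_lt_top fun θ _ => hre θ
    rwa [measureReal_unit_cube, mul_one] at this
  have hfacts : Continuous (fun θ => (U θ).re - m) ∧
      (∀ (θ : Fin d → ℝ) (k : Fin d → ℤ),
        (U (θ + fun i => (k i : ℝ))).re - m = (U θ).re - m) ∧
      fourierCoef (fun θ => (U θ).re - m) 0 = 0 ∧
      ∀ θ, ((U θ).re - m) - ((U (θ + ω)).re - m) = Q θ := by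
    refine ⟨by fun_prop, fun θ k => by rw [hUper], ?_, fun θ => ?_⟩
    · rw [fourierCoef_zero, integral_sub (hcontre.integrableOn_Icc)
        (continuous_const.integrableOn_Icc), setIntegral_const, measureReal_unit_cube]
      simp [hm]
    · have := congrArg Complex.re (hUeq θ)
      simp only [Complex.sub_re, Complex.ofReal_re] at this
      linarith
  obtain ⟨hWc, hWp, hW0, hWe⟩ := hfacts
  refine ⟨fun θ => (U θ).re - m, ⟨hWc, hWp, hW0, hWe⟩, ?_, fun θ => ?_⟩
  · rintro W' ⟨hc', hp', h0', he'⟩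
    funext θ
    refine sub_eq_zero.1 (eq_zero_of_invariant ω hne (fun θ => W' θ - ((U θ).re - m))
      (hc'.sub hWc) (fun θ k => by rw [hp', hWp]) ?_ (fun θ => ?_) θ)
    · rw [fourierCoef_zero] at h0' hW0 ⊢
      rw [integral_sub hc'.integrableOn_Icc hWc.integrableOn_Icc, Complex.ofReal_sub, h0', hW0,
        sub_zero]
    · linarith [he' θ, hWe θ]
  · have hBpos : 0 < B := by positivity
    calc |(U θ).re - m| ≤ |(U θ).re| + |m| := abs_sub _ _
      _ ≤ M / (4 * ν) * B + M / (4 * ν) * B := add_le_add (hre θ) hmle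
      _ = (M / ν * B) / 2 := by field_simp; ring
      _ ≤ M / ν * B := half_le_self (by positivity)
      _ = _ := by rw [hB]; field_simp
end

section
/- Let Ω₀ ∈ ℝ^d be resonant with resonance module Γ = Γ_{Ω₀}(ℤ), and suppose there exist ν, τ > 0 such that dist(k·Ω₀, ℤ) ≥ ν|k|^{−τ} for every k ∈ ℤ^d ∖ Γ. Let ρ > 0, M ≥ 0 and let f: ℝ^d → ℝ be a continuous ℤ^d-periodic function with Fourier coefficients |f̂(k)| ≤ M·e^{−2πρ|k|} for all k ∈ ℤ^d. Then there exist continuous ℤ^d-periodic functions h, P: ℝ^d → ℝ such that: P̂(k) = 0 for every k ∉ Γ; ĥ(k) = 0 for every k ∈ Γ; h(θ+Ω₀) − h(θ) = f(θ) − P(θ) for all θ ∈ ℝ^d; |P̂(k)| ≤ M·e^{−2πρ|k|} for all k; and sup_{θ∈ℝ^d} |h(θ)| ≤ C·ν^{−1}·ρ^{−(τ+d)}·M for a constant C depending only on d and τ. (This is the basic averaging step: the cohomology equation over the rotation by Ω₀ is solved up to a term whose Fourier spectrum lies on the resonance module.) -/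
/-!
The proof is Fourier analysis on the torus. Since the coefficients of `f` decay exponentially they
are summable, and `f` is the sum of its Fourier series (`hasSum_fourierCoef`). Split this series
along the resonance module `Γ`. The resonant part is `P`. For `k ∉ Γ` the divisor
`exp (2πi k·Ω₀) - 1` does not vanish, so the cohomology equation is solved mode by mode by
`ĥ(k) = f̂(k) / (exp (2πi k·Ω₀) - 1)`.

The Diophantine condition bounds the divisor below by `ν |k|^{-τ}` (`le_norm_exp_sub_one`), whence
`|h| ≤ ν⁻¹ M ∑_{k ≠ 0} |k|^τ exp (-2πρ|k|)`. This lattice sum is at most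
`τ^τ e² d! ρ^{-(τ+d)}` (`summable_and_tsum_le_of_bound`): the power is absorbed through
`x^τ ≤ τ^τ exp x`, and what remains factors into geometric series over `ℤ`.

Real functions are obtained by taking real parts of the complex series (`reSeries`); this respects
the equation, because `f` is real, and the location of the spectrum, because `Γ = -Γ`.
-/

open scoped BigOperators
open MeasureTheory

/-! ### Lattice sums and small divisors -/

lemma hasSum_exp_neg_abs_int {s : ℝ} (hs : 0 < s) :
    ∃ S ≤ 1 + 2 / s, HasSum (fun n : ℤ => Real.exp (-s * |(n : ℝ)|)) S := by
  set r := Real.exp (-s) with hr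
  have hr0 : 0 < r := Real.exp_pos _
  have hr1 : r < 1 := by rw [hr]; simpa using hs
  have hg := hasSum_geometric_of_lt_one hr0.le hr1
  have hg' : HasSum (fun n : ℕ => Real.exp (-s * |(((n : ℤ) + 1 : ℤ) : ℝ)|)) (r * (1 - r)⁻¹) := by
    refine (hg.mul_left r).congr_fun fun n => ?_
    have h0 : (0 : ℝ) ≤ (n : ℝ) + 1 := by positivity
    push_cast
    rw [abs_of_nonneg h0, ← pow_succ', hr, ← Real.exp_nat_mul]
    congr 1; push_cast; ring
  have hg'' : HasSum (fun n : ℕ => Real.exp (-s * |((-((n : ℤ) + 1) : ℤ) : ℝ)|))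
      (r * (1 - r)⁻¹) := by
    refine hg'.congr_fun fun n => ?_
    push_cast
    rw [← abs_neg]
    congr 3
    ring
  refine ⟨_, ?_, HasSum.of_add_one_of_neg_add_one hg' hg''⟩
  have h1 : r * (1 - r)⁻¹ ≤ 1 / s := by
    rw [← div_eq_mul_inv, div_le_div_iff₀ (by linarith) hs]
    -- `r * exp s = 1` and `exp s ≥ 1 + s`
    have h2 : r * Real.exp s = 1 := by rw [hr, ← Real.exp_add]; simp
    nlinarith [Real.add_one_le_exp s]
  have h2 : 2 / s = 1 / s + 1 / s := by ring
  simp only [Int.cast_zero, abs_zero, mul_zero, Real.exp_zero]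
  linarith

/-- A finite set of lattice points lies in a box, over which the sum factors into `d` sums
over `ℤ`. -/
lemma sum_exp_neg_le {d : ℕ} {s : ℝ} (hs : 0 < s) (u : Finset (Fin d → ℤ)) :
    ∑ k ∈ u, Real.exp (-s * ∑ i, |(k i : ℝ)|) ≤ (1 + 2 / s) ^ d := by
  classical
  obtain ⟨S, hS, hsum⟩ := hasSum_exp_neg_abs_int hs
  set t : Fin d → Finset ℤ := fun i => u.image (fun k => k i)
  calc ∑ k ∈ u, Real.exp (-s * ∑ i, |(k i : ℝ)|)
      ≤ ∑ k ∈ Fintype.piFinset t, Real.exp (-s * ∑ i, |(k i : ℝ)|) := by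
        refine Finset.sum_le_sum_of_subset_of_nonneg (fun k hk => ?_)
          (fun _ _ _ => (Real.exp_pos _).le)
        exact Fintype.mem_piFinset.2 fun i => Finset.mem_image_of_mem _ hk
    _ = ∏ i, ∑ n ∈ t i, Real.exp (-s * |(n : ℝ)|) := by
        rw [Finset.prod_univ_sum]
        refine Finset.sum_congr rfl fun k _ => ?_
        rw [Finset.mul_sum, Real.exp_sum]
    _ ≤ ∏ _i : Fin d, (1 + 2 / s) :=
        Finset.prod_le_prod (fun i _ => Finset.sum_nonneg fun _ _ => (Real.exp_pos _).le)
          fun i _ => (sum_le_hasSum _ (fun _ _ => (Real.exp_pos _).le) hsum).trans hS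
    _ = _ := by simp

lemma summable_exp_neg {d : ℕ} {s : ℝ} (hs : 0 < s) :
    Summable fun k : Fin d → ℤ => Real.exp (-s * ∑ i, |(k i : ℝ)|) :=
  summable_of_sum_le (fun _ => (Real.exp_pos _).le) (sum_exp_neg_le hs)

lemma one_le_sum_abs {d : ℕ} {k : Fin d → ℤ} (hk : k ≠ 0) : 1 ≤ ∑ i, |(k i : ℝ)| := by
  obtain ⟨i, hi⟩ := Function.ne_iff.1 hk
  have h1 : (1 : ℝ) ≤ |(k i : ℝ)| := by
    have := Int.one_le_abs hi
    exact_mod_cast this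
  exact h1.trans (Finset.single_le_sum (f := fun i => |(k i : ℝ)|)
    (fun _ _ => abs_nonneg _) (Finset.mem_univ i))

lemma rpow_le_mul_exp {τ x : ℝ} (hτ : 0 < τ) (hx : 0 < x) :
    x ^ τ ≤ τ ^ τ * Real.exp x := by
  have h1 : x / τ ≤ Real.exp (x / τ) := by linarith [Real.add_one_le_exp (x / τ)]
  calc x ^ τ = τ ^ τ * (x / τ) ^ τ := by
        rw [← Real.mul_rpow hτ.le (by positivity)]; congr 1; field_simp
    _ ≤ τ ^ τ * Real.exp (x / τ) ^ τ := by gcongr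
    _ = τ ^ τ * Real.exp x := by rw [← Real.exp_mul]; congr 2; field_simp

/-- One third of the exponent `2πρN ≥ 3ρN` absorbs the power `N^τ`, one third yields `exp (-ρ)`
because `N ≥ 1`, and the last third is kept for summation over the lattice. -/
lemma rpow_mul_exp_le_s7 {τ ρ N : ℝ} (hτ : 0 < τ) (hρ : 0 < ρ) (hN : 1 ≤ N) :
    N ^ τ * Real.exp (-(2 * Real.pi * ρ) * N) ≤
      ρ ^ (-τ) * τ ^ τ * Real.exp (-ρ) * Real.exp (-ρ * N) := by
  have hN0 : 0 < N := by linarith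
  have h1 : N ^ τ = ρ ^ (-τ) * (ρ * N) ^ τ := by
    rw [Real.mul_rpow hρ.le hN0.le, ← mul_assoc, ← Real.rpow_add hρ]; simp
  have h2 : Real.exp (ρ * N) * Real.exp (-(2 * Real.pi * ρ) * N) ≤
      Real.exp (-ρ) * Real.exp (-ρ * N) := by
    rw [← Real.exp_add, ← Real.exp_add]
    apply Real.exp_le_exp.2
    have h3 : ρ * N * 3 ≤ ρ * N * Real.pi := by
      have := Real.pi_gt_three; gcongr
    nlinarith [mul_le_mul_of_nonneg_left hN hρ.le]
  calc N ^ τ * Real.exp (-(2 * Real.pi * ρ) * N)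
      = ρ ^ (-τ) * (ρ * N) ^ τ * Real.exp (-(2 * Real.pi * ρ) * N) := by rw [h1]
    _ ≤ ρ ^ (-τ) * (τ ^ τ * Real.exp (ρ * N)) * Real.exp (-(2 * Real.pi * ρ) * N) := by
        have := rpow_le_mul_exp hτ (mul_pos hρ hN0)
        gcongr
    _ = ρ ^ (-τ) * τ ^ τ * (Real.exp (ρ * N) * Real.exp (-(2 * Real.pi * ρ) * N)) := by ring
    _ ≤ ρ ^ (-τ) * τ ^ τ * (Real.exp (-ρ) * Real.exp (-ρ * N)) := by gcongr
    _ = _ := by ring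

/-- The lattice sum `(1 + 2/ρ)^d` is `O(ρ^{-d})` only for small `ρ`; the factor `exp (-ρ)` extends
this to all `ρ > 0`. -/
lemma exp_neg_mul_pow_le (d : ℕ) {ρ : ℝ} (hρ : 0 < ρ) :
    Real.exp (-ρ) * (1 + 2 / ρ) ^ d ≤ Real.exp 2 * d.factorial * ρ ^ (-(d : ℝ)) := by
  have h1 : (ρ + 2) ^ d ≤ Real.exp (ρ + 2) * d.factorial := by
    have := Real.pow_div_factorial_le_exp (ρ + 2) (by positivity) d
    rwa [div_le_iff₀ (by positivity)] at this
  have h2 : (1 + 2 / ρ) = (ρ + 2) / ρ := by field_simp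
  rw [h2, div_pow, Real.rpow_neg hρ.le, Real.rpow_natCast, mul_div_assoc', div_eq_mul_inv]
  refine mul_le_mul_of_nonneg_right ?_ (by positivity)
  calc Real.exp (-ρ) * (ρ + 2) ^ d ≤ Real.exp (-ρ) * (Real.exp (ρ + 2) * d.factorial) := by gcongr
    _ = _ := by rw [← mul_assoc, ← Real.exp_add]; congr 2; ring

/-- The quantitative heart of the bound on `h`: coefficients vanishing at `k = 0` and dominated by
`K |k|^τ exp (-2πρ|k|)` are summable, with sum `O(K ρ^{-(τ+d)})` uniformly in `ρ > 0`.
The vanishing at `0` matters only for large `ρ`, where it supplies the factor `exp (-ρ)`. -/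
lemma summable_and_tsum_le_of_bound {d : ℕ} {τ ρ K : ℝ} (hτ : 0 < τ) (hρ : 0 < ρ) (hK : 0 ≤ K)
    {a : (Fin d → ℤ) → ℂ} (ha0 : a 0 = 0)
    (ha : ∀ k, k ≠ 0 → ‖a k‖ ≤
      K * ((∑ i, |(k i : ℝ)|) ^ τ * Real.exp (-(2 * Real.pi * ρ) * ∑ i, |(k i : ℝ)|))) :
    Summable (fun k => ‖a k‖) ∧
      ∑' k, ‖a k‖ ≤ K * (τ ^ τ * Real.exp 2 * d.factorial * ρ ^ (-(τ + (d : ℝ)))) := by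
  have key : ∀ u : Finset (Fin d → ℤ), ∑ k ∈ u, ‖a k‖ ≤
      K * (τ ^ τ * Real.exp 2 * d.factorial * ρ ^ (-(τ + (d : ℝ)))) := by
    intro u
    have hterm : ∀ k, ‖a k‖ ≤ K * (ρ ^ (-τ) * τ ^ τ * Real.exp (-ρ)) *
        Real.exp (-ρ * ∑ i, |(k i : ℝ)|) := by
      intro k
      by_cases hk : k = 0
      · rw [hk, ha0, norm_zero]; positivity
      · refine (ha k hk).trans ?_
        rw [mul_assoc K]
        exact mul_le_mul_of_nonneg_left (rpow_mul_exp_le_s7 hτ hρ (one_le_sum_abs hk)) hK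
    calc ∑ k ∈ u, ‖a k‖ ≤ ∑ k ∈ u, K * (ρ ^ (-τ) * τ ^ τ * Real.exp (-ρ)) *
        Real.exp (-ρ * ∑ i, |(k i : ℝ)|) := Finset.sum_le_sum fun k _ => hterm k
      _ = K * (ρ ^ (-τ) * τ ^ τ * Real.exp (-ρ)) *
          ∑ k ∈ u, Real.exp (-ρ * ∑ i, |(k i : ℝ)|) := by rw [Finset.mul_sum]
      _ ≤ K * (ρ ^ (-τ) * τ ^ τ * Real.exp (-ρ)) * (1 + 2 / ρ) ^ d :=
          mul_le_mul_of_nonneg_left (sum_exp_neg_le hρ u) (by positivity)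
      _ = K * (ρ ^ (-τ) * τ ^ τ * (Real.exp (-ρ) * (1 + 2 / ρ) ^ d)) := by ring
      _ ≤ K * (ρ ^ (-τ) * τ ^ τ * (Real.exp 2 * d.factorial * ρ ^ (-(d : ℝ)))) := by
          have := exp_neg_mul_pow_le d hρ
          gcongr
      _ = _ := by
          rw [neg_add, Real.rpow_add hρ]; ring
  exact ⟨summable_of_sum_le (fun _ => norm_nonneg _) key,
    Real.tsum_le_of_sum_le (fun _ => norm_nonneg _) key⟩

/-- If `x` is at distance at least `δ` from `ℤ`, then `|exp (2πix) - 1| = 2|sin πx| ≥ δ`, by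
Jordan's inequality for the sine. -/
lemma le_norm_exp_sub_one {x δ : ℝ} (h : ∀ n : ℤ, δ ≤ |x - n|) :
    δ ≤ ‖Complex.exp (2 * (Real.pi : ℂ) * Complex.I * x) - 1‖ := by
  set y := x - round x with hy
  have hy2 : |y| ≤ 1 / 2 := abs_sub_round x
  have h1 : Complex.exp (2 * (Real.pi : ℂ) * Complex.I * x) =
      Complex.exp (Complex.I * ((2 * Real.pi * y : ℝ) : ℂ)) := by
    rw [Complex.exp_eq_exp_iff_exists_int]
    refine ⟨round x, ?_⟩
    rw [hy]; push_cast; ring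
  rw [h1, Complex.norm_exp_I_mul_ofReal_sub_one]
  have h2 : 2 * Real.pi * y / 2 = Real.pi * y := by ring
  have h3 : 2 * |y| ≤ |Real.sin (Real.pi * y)| := by
    have h4 : |Real.sin (Real.pi * y)| = |Real.sin (Real.pi * |y|)| := by
      rcases abs_cases y with ⟨h, _⟩ | ⟨h, _⟩ <;> simp [h]
    rw [h4]
    refine le_trans ?_ (le_abs_self _)
    have h5 := Real.mul_le_sin (x := Real.pi * |y|) (by positivity)
      (by nlinarith [Real.pi_pos])
    refine le_trans (le_of_eq ?_) h5
    have := Real.pi_ne_zero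
    field_simp
  rw [h2, norm_mul, Real.norm_eq_abs, Real.norm_eq_abs, abs_two]
  linarith [h (round x), abs_nonneg y]

/-! ### Fourier series on the torus -/

/-- The character `θ ↦ exp (2πi k·θ)` of `ℝ^d` attached to `k ∈ ℤ^d`. -/
noncomputable def torusChar {d : ℕ} (k : Fin d → ℤ) (θ : Fin d → ℝ) : ℂ :=
  Complex.exp (2 * (Real.pi : ℂ) * Complex.I * ((∑ i, (k i : ℝ) * θ i : ℝ) : ℂ))

lemma torusChar_add {d : ℕ} (k : Fin d → ℤ) (θ η : Fin d → ℝ) :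
    torusChar k (θ + η) = torusChar k θ * torusChar k η := by
  simp only [torusChar, Pi.add_apply, mul_add, Finset.sum_add_distrib, Complex.ofReal_add,
    Complex.exp_add]

lemma torusChar_add_index {d : ℕ} (k l : Fin d → ℤ) (θ : Fin d → ℝ) :
    torusChar (k + l) θ = torusChar k θ * torusChar l θ := by
  simp only [torusChar, Pi.add_apply, Int.cast_add, add_mul, Finset.sum_add_distrib,
    Complex.ofReal_add, mul_add, Complex.exp_add]

lemma torusChar_eq_one_of_resonant {d : ℕ} {k : Fin d → ℤ} {θ : Fin d → ℝ} {n : ℤ}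
    (h : ∑ i, (k i : ℝ) * θ i = n) : torusChar k θ = 1 := by
  rw [torusChar, h, mul_comm]
  exact_mod_cast Complex.exp_int_mul_two_pi_mul_I n

lemma torusChar_int {d : ℕ} (k l : Fin d → ℤ) : torusChar k (fun i => (l i : ℝ)) = 1 :=
  torusChar_eq_one_of_resonant (n := ∑ i, k i * l i) (by push_cast; rfl)

lemma norm_torusChar {d : ℕ} (k : Fin d → ℤ) (θ : Fin d → ℝ) : ‖torusChar k θ‖ = 1 := by
  rw [torusChar, ← Complex.norm_exp_ofReal_mul_I (2 * Real.pi * ∑ i, (k i : ℝ) * θ i)]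
  congr 2; push_cast; ring

lemma conj_torusChar {d : ℕ} (k : Fin d → ℤ) (θ : Fin d → ℝ) :
    (starRingEnd ℂ) (torusChar k θ) = torusChar (-k) θ := by
  have h2 : (starRingEnd ℂ) (2 : ℂ) = 2 := Complex.conj_ofNat 2
  rw [torusChar, ← Complex.exp_conj, torusChar]
  simp [h2]

lemma continuous_torusChar {d : ℕ} (k : Fin d → ℤ) : Continuous (torusChar k) := by
  unfold torusChar; fun_prop

lemma fourierCoef_eq {d : ℕ} (Q : (Fin d → ℝ) → ℝ) (k : Fin d → ℤ) :
    fourierCoef Q k = ∫ θ in Set.Icc (0 : Fin d → ℝ) 1, (Q θ : ℂ) * torusChar (-k) θ := by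
  unfold fourierCoef torusChar
  congr with θ
  congr 2
  push_cast
  simp

lemma integral_exp_int (n : ℤ) :
    ∫ x in Set.Icc (0 : ℝ) 1, Complex.exp (2 * (Real.pi : ℂ) * Complex.I * n * x) =
      if n = 0 then 1 else 0 := by
  split_ifs with hn
  · simp [hn]
  · have hc : 2 * (Real.pi : ℂ) * Complex.I * n ≠ 0 := by
      have : (Real.pi : ℂ) ≠ 0 := by exact_mod_cast Real.pi_ne_zero
      simp [hn]
    rw [integral_Icc_eq_integral_Ioc, ← intervalIntegral.integral_of_le zero_le_one,
      integral_exp_mul_complex hc]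
    have : Complex.exp (2 * (Real.pi : ℂ) * Complex.I * n) = 1 := by
      rw [mul_comm]; exact Complex.exp_int_mul_two_pi_mul_I n
    simp [this]

lemma integral_torusChar {d : ℕ} (k : Fin d → ℤ) :
    ∫ θ in Set.Icc (0 : Fin d → ℝ) 1, torusChar k θ = if k = 0 then 1 else 0 := by
  have h1 : ∀ θ, torusChar k θ =
      ∏ i, Complex.exp (2 * (Real.pi : ℂ) * Complex.I * k i * (θ i : ℝ)) := by
    intro θ
    rw [torusChar, ← Complex.exp_sum]
    push_cast
    rw [Finset.mul_sum]
    simp only [mul_assoc]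
  simp_rw [h1]
  rw [← Set.pi_univ_Icc, volume_pi, Measure.restrict_pi_pi]
  simp only [Pi.zero_apply, Pi.one_apply]
  rw [integral_fintype_prod_eq_prod
    (fun i (x : ℝ) => Complex.exp (2 * (Real.pi : ℂ) * Complex.I * k i * x))]
  simp_rw [integral_exp_int]
  split_ifs with hk
  · simp [hk]
  · obtain ⟨i, hi⟩ := Function.ne_iff.1 hk
    exact Finset.prod_eq_zero (Finset.mem_univ i) (if_neg hi)

/-- A real function given pointwise by an absolutely summable trigonometric series has the
coefficients of that series as its Fourier coefficients. -/
lemma fourierCoef_of_hasSum {d : ℕ} {Q : (Fin d → ℝ) → ℝ} {b : (Fin d → ℤ) → ℂ}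
    (hb : Summable fun k => ‖b k‖) (hQ : ∀ θ, HasSum (fun k => b k * torusChar k θ) (Q θ : ℂ))
    (k : Fin d → ℤ) : fourierCoef Q k = b k := by
  rw [fourierCoef_eq]
  have hfin : IsFiniteMeasure (volume.restrict (Set.Icc (0 : Fin d → ℝ) 1)) :=
    ⟨by rw [Measure.restrict_apply_univ]; exact isCompact_Icc.measure_lt_top⟩
  have hF : ∀ θ l, b l * torusChar l θ * torusChar (-k) θ = b l * torusChar (l - k) θ := by
    intro θ l
    rw [sub_eq_add_neg, torusChar_add_index, mul_assoc]
  have h1 : ∀ θ, HasSum (fun l => b l * torusChar (l - k) θ) ((Q θ : ℂ) * torusChar (-k) θ) :=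
    fun θ => ((hQ θ).mul_right (torusChar (-k) θ)).congr_fun fun l => (hF θ l).symm
  have h2 := hasSum_integral_of_dominated_convergence
    (μ := volume.restrict (Set.Icc (0 : Fin d → ℝ) 1))
    (F := fun l θ => b l * torusChar (l - k) θ)
    (f := fun θ => (Q θ : ℂ) * torusChar (-k) θ) (fun l _ => ‖b l‖)
    (fun l => ((continuous_torusChar _).const_mul _).aestronglyMeasurable)
    (fun l => Filter.Eventually.of_forall fun θ => by rw [norm_mul, norm_torusChar, mul_one])
    (Filter.Eventually.of_forall fun _ => hb) (integrable_const _)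
    (Filter.Eventually.of_forall h1)
  refine h2.unique ?_
  refine (hasSum_ite_eq k (b k)).congr_fun fun l => ?_
  rw [integral_const_mul, integral_torusChar]
  by_cases h : l = k <;> simp [h, sub_eq_zero]

/-- Fourier inversion for a continuous periodic function with summable Fourier coefficients,
obtained by descending `f` to Mathlib's `UnitAddTorus`. -/
lemma hasSum_fourierCoef {d : ℕ} {f : (Fin d → ℝ) → ℝ} (hf : Continuous f)
    (hper : ∀ (θ : Fin d → ℝ) (k : Fin d → ℤ), f (θ + fun i => (k i : ℝ)) = f θ)
    (hs : Summable fun k => ‖fourierCoef f k‖) (θ : Fin d → ℝ) :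
    HasSum (fun k => fourierCoef f k * torusChar k θ) (f θ : ℂ) := by
  -- the covering map `ℝ^d → (ℝ/ℤ)^d`, a quotient map, so that continuity descends along it
  set π : (Fin d → ℝ) → UnitAddTorus (Fin d) := Pi.map fun _ x => (x : UnitAddCircle) with hπdef
  have hπ : IsOpenQuotientMap π :=
    IsOpenQuotientMap.piMap fun _ => QuotientAddGroup.isOpenQuotientMap_mk
  have hfac : ∀ x y, π x = π y → f x = f y := by
    intro x y hxy
    have h1 : ∀ i, ∃ n : ℤ, y i = x i + n := by
      intro i
      have h2 : ((x i : ℝ) : UnitAddCircle) = (y i : ℝ) := congrFun hxy i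
      obtain ⟨n, hn⟩ := AddSubgroup.mem_zmultiples_iff.1 (QuotientAddGroup.eq.1 h2)
      refine ⟨n, ?_⟩
      simp only [zsmul_eq_mul, mul_one] at hn
      linarith
    choose n hn using h1
    rw [← hper x n]
    congr 1
    ext i
    exact (hn i).symm
  set g : UnitAddTorus (Fin d) → ℂ := fun z => (f (Function.surjInv hπ.surjective z) : ℂ) with hg
  have hgπ : ∀ x, g (π x) = f x := fun x => by
    simp only [hg]
    rw [hfac _ x (Function.surjInv_eq hπ.surjective _)]
  have hgc : Continuous g := by
    rw [← hπ.continuous_comp_iff]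
    have : g ∘ π = fun x => (f x : ℂ) := funext hgπ
    rw [this]; fun_prop
  have hm : ∀ k x, UnitAddTorus.mFourier k (π x) = torusChar k x := by
    intro k x
    simp only [UnitAddTorus.mFourier, ContinuousMap.coe_mk, hπdef, Pi.map_apply, fourier_coe_apply,
      ← Complex.exp_sum, torusChar]
    congr 1
    push_cast
    rw [Finset.mul_sum]
    refine Finset.sum_congr rfl fun i _ => by ring
  have hcoef : ∀ k, UnitAddTorus.mFourierCoeff g k = fourierCoef f k := by
    intro k
    rw [UnitAddTorus.mFourierCoeff_eq_integral g k 0, fourierCoef_eq]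
    -- Mathlib integrates over the half-open cube, which differs from `[0,1]^d` by a null set
    have hset : {x : Fin d → ℝ | ∀ i, x i ∈ Set.Ioc ((0 : Fin d → ℝ) i) ((0 : Fin d → ℝ) i + 1)} =
        Set.univ.pi fun i => Set.Ioc ((0 : Fin d → ℝ) i) ((1 : Fin d → ℝ) i) := by
      ext x; simp
    rw [hset, volume_pi, setIntegral_congr_set Measure.univ_pi_Ioc_ae_eq_Icc]
    congr with x
    have h1 := hm (-k) x
    have h2 := hgπ x
    rw [smul_eq_mul, mul_comm]
    exact congrArg₂ (· * ·) h2 h1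
  have hsum : Summable (UnitAddTorus.mFourierCoeff (⟨g, hgc⟩ : C(UnitAddTorus (Fin d), ℂ))) := by
    refine Summable.of_norm (hs.congr fun k => ?_)
    rw [← hcoef]; rfl
  have := UnitAddTorus.hasSum_mFourier_series_apply_of_summable hsum (π θ)
  simp only [ContinuousMap.coe_mk, hgπ, hm, hcoef, smul_eq_mul] at this
  exact this

/-- The real part of the trigonometric series `∑ₖ a k exp (2πi k·θ)`. -/
noncomputable def reSeries {d : ℕ} (a : (Fin d → ℤ) → ℂ) (θ : Fin d → ℝ) : ℝ :=
  (∑' k, a k * torusChar k θ).re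

section reSeries
variable {d : ℕ} {a : (Fin d → ℤ) → ℂ}

lemma hasSum_series (ha : Summable fun k => ‖a k‖) (θ : Fin d → ℝ) :
    HasSum (fun k => a k * torusChar k θ) (∑' k, a k * torusChar k θ) := by
  refine (Summable.of_norm (ha.congr fun k => ?_)).hasSum
  rw [norm_mul, norm_torusChar, mul_one]

lemma continuous_reSeries (ha : Summable fun k => ‖a k‖) : Continuous (reSeries a) := by
  refine Complex.continuous_re.comp (continuous_tsum
    (fun k => (continuous_torusChar k).const_mul _) ha fun k θ => ?_)
  rw [norm_mul, norm_torusChar, mul_one]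

lemma reSeries_add_int (θ : Fin d → ℝ) (l : Fin d → ℤ) :
    reSeries a (θ + fun i => (l i : ℝ)) = reSeries a θ := by
  simp only [reSeries, torusChar_add, torusChar_int, mul_one]

lemma abs_reSeries_le (ha : Summable fun k => ‖a k‖) (θ : Fin d → ℝ) :
    |reSeries a θ| ≤ ∑' k, ‖a k‖ := by
  refine (Complex.abs_re_le_norm _).trans (tsum_of_norm_bounded ha.hasSum fun k => ?_)
  rw [norm_mul, norm_torusChar, mul_one]

/-- No symmetry of `a` is assumed: taking the real part symmetrizes the coefficients under
`a k ↦ conj (a (-k))`. -/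
lemma fourierCoef_reSeries (ha : Summable fun k => ‖a k‖) (k : Fin d → ℤ) :
    fourierCoef (reSeries a) k = (a k + (starRingEnd ℂ) (a (-k))) / 2 := by
  have ha' : Summable fun k => ‖a (-k)‖ :=
    (Equiv.neg (Fin d → ℤ)).summable_iff (f := fun k => ‖a k‖) |>.2 ha
  refine fourierCoef_of_hasSum (b := fun k => (a k + (starRingEnd ℂ) (a (-k))) / 2) ?_ ?_ k
  · refine Summable.of_nonneg_of_le (fun _ => norm_nonneg _) (fun k => ?_) (ha.add ha')
    rw [norm_div, Complex.norm_two]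
    have h1 := norm_add_le (a k) ((starRingEnd ℂ) (a (-k)))
    rw [RCLike.norm_conj] at h1
    linarith [norm_nonneg (a k), norm_nonneg (a (-k)), norm_nonneg (a k + (starRingEnd ℂ) (a (-k)))]
  · intro θ
    have h1 := hasSum_series ha θ
    have h2 := (Equiv.neg (Fin d → ℤ)).hasSum_iff.2 (Complex.hasSum_conj'.2 h1)
    rw [reSeries, Complex.re_eq_add_conj]
    refine ((h1.add h2).div_const 2).congr_fun fun k => ?_
    simp only [Function.comp_apply, Equiv.neg_apply, map_mul, conj_torusChar, neg_neg]
    ring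

end reSeries

/-! ### The averaging step -/

/-- The small-divisor estimate for one coefficient of the solution. -/
lemma norm_div_torusChar_sub_one_le {d : ℕ} {τ ν B : ℝ} {Ω : Fin d → ℝ} {k : Fin d → ℤ} {c : ℂ}
    (hν : 0 < ν) (hk : k ≠ 0)
    (hdio : ∀ n : ℤ, ν * (∑ i, |(k i : ℝ)|) ^ (-τ) ≤ |(∑ i, (k i : ℝ) * Ω i) - (n : ℝ)|)
    (hc : ‖c‖ ≤ B) :
    ‖c / (torusChar k Ω - 1)‖ ≤ ν⁻¹ * (∑ i, |(k i : ℝ)|) ^ τ * B := by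
  have hN : 0 < ∑ i, |(k i : ℝ)| := by linarith [one_le_sum_abs hk]
  have h1 := le_norm_exp_sub_one hdio
  have h2 : 0 < ν * (∑ i, |(k i : ℝ)|) ^ (-τ) := by positivity
  rw [norm_div, torusChar]
  refine (div_le_div₀ ((norm_nonneg c).trans hc) hc h2 h1).trans (le_of_eq ?_)
  rw [Real.rpow_neg hN.le, div_eq_mul_inv, mul_inv, inv_inv, mul_comm]

/-- basic averaging step for a resonant rotation `Ω₀` which is Diophantine
off its resonance module `Γ`: given `f` with exponentially decaying Fourier
coefficients, there are continuous periodic `h, P` with `spec(P) ⊆ Γ`, `spec(h) ∩ Γ = ∅`,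
`h(θ+Ω₀) − h(θ) = f(θ) − P(θ)`, `|P̂(k)| ≤ M e^{−2πρ|k|}` and
`sup|h| ≤ C ν⁻¹ ρ^{−(τ+d)} M` with `C = C(d,τ)`. -/
theorem averaging_step_cohomology_up_to_resonant_terms
    (d : ℕ) (τ : ℝ) (hτ : 0 < τ) :
    ∃ C : ℝ, 0 < C ∧
      ∀ (ν ρ M : ℝ) (Ω₀ : Fin d → ℝ), 0 < ν → 0 < ρ → 0 ≤ M →
      (∃ k : Fin d → ℤ, k ≠ 0 ∧ ∃ n : ℤ, (∑ i, (k i : ℝ) * Ω₀ i) = (n : ℝ)) →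
      (∀ k : Fin d → ℤ, ¬(∃ n : ℤ, (∑ i, (k i : ℝ) * Ω₀ i) = (n : ℝ)) →
        ∀ n : ℤ,
          ν * (∑ i, |(k i : ℝ)|) ^ (-τ) ≤ |(∑ i, (k i : ℝ) * Ω₀ i) - (n : ℝ)|) →
      ∀ f : (Fin d → ℝ) → ℝ, Continuous f →
      (∀ (θ : Fin d → ℝ) (k : Fin d → ℤ), f (θ + fun i => (k i : ℝ)) = f θ) →
      (∀ k : Fin d → ℤ,
        ‖fourierCoef f k‖ ≤ M * Real.exp (-(2 * Real.pi * ρ) * ∑ i, |(k i : ℝ)|)) →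
      ∃ h P : (Fin d → ℝ) → ℝ,
        Continuous h ∧ Continuous P ∧
        (∀ (θ : Fin d → ℝ) (k : Fin d → ℤ), h (θ + fun i => (k i : ℝ)) = h θ) ∧
        (∀ (θ : Fin d → ℝ) (k : Fin d → ℤ), P (θ + fun i => (k i : ℝ)) = P θ) ∧
        (∀ k : Fin d → ℤ, ¬(∃ n : ℤ, (∑ i, (k i : ℝ) * Ω₀ i) = (n : ℝ)) →
          fourierCoef P k = 0) ∧
        (∀ k : Fin d → ℤ, (∃ n : ℤ, (∑ i, (k i : ℝ) * Ω₀ i) = (n : ℝ)) →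
          fourierCoef h k = 0) ∧
        (∀ θ, h (θ + Ω₀) - h θ = f θ - P θ) ∧
        (∀ k : Fin d → ℤ,
          ‖fourierCoef P k‖ ≤ M * Real.exp (-(2 * Real.pi * ρ) * ∑ i, |(k i : ℝ)|)) ∧
        (∀ θ, |h θ| ≤ C * ν⁻¹ * ρ ^ (-(τ + (d : ℝ))) * M) := by
  classical
  refine ⟨τ ^ τ * Real.exp 2 * d.factorial, by positivity, ?_⟩
  intro ν ρ M Ω₀ hν hρ hM _ hdio f hf hper hdecay
  have hsf : Summable fun k => ‖fourierCoef f k‖ :=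
    Summable.of_nonneg_of_le (fun _ => norm_nonneg _) hdecay
      ((summable_exp_neg (by positivity : 0 < 2 * Real.pi * ρ)).mul_left M)
  set Γ : Set (Fin d → ℤ) := {k | ∃ n : ℤ, (∑ i, (k i : ℝ) * Ω₀ i) = (n : ℝ)} with hΓ
  have hΓneg : ∀ k, k ∈ Γ → -k ∈ Γ := by
    rintro k ⟨n, hn⟩
    refine ⟨-n, ?_⟩
    simp only [Pi.neg_apply, Int.cast_neg, neg_mul, Finset.sum_neg_distrib, hn]
  have hΓneg' : ∀ k, k ∉ Γ → -k ∉ Γ := fun k hk h => hk (by simpa using hΓneg _ h)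
  have hΓ0 : (0 : Fin d → ℤ) ∈ Γ := ⟨0, by simp⟩
  have hne : ∀ k, k ∉ Γ → k ≠ 0 := fun k hk h => hk (h ▸ hΓ0)
  -- `p` is the resonant part of `f`, and `a` solves the cohomology equation off `Γ`
  set p : (Fin d → ℤ) → ℂ := fun k => if k ∈ Γ then fourierCoef f k else 0 with hp
  set a : (Fin d → ℤ) → ℂ := fun k =>
    if k ∈ Γ then 0 else fourierCoef f k / (torusChar k Ω₀ - 1) with ha
  have hpbound : ∀ k, ‖p k‖ ≤ M * Real.exp (-(2 * Real.pi * ρ) * ∑ i, |(k i : ℝ)|) := by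
    intro k
    simp only [hp]
    split_ifs
    · exact hdecay k
    · rw [norm_zero]; positivity
  have hps : Summable fun k => ‖p k‖ :=
    Summable.of_nonneg_of_le (fun _ => norm_nonneg _) hpbound
      ((summable_exp_neg (by positivity : 0 < 2 * Real.pi * ρ)).mul_left M)
  obtain ⟨has, hatsum⟩ := summable_and_tsum_le_of_bound (a := a) (K := ν⁻¹ * M) hτ hρ
    (by positivity) (by simp [ha, hΓ0]) (by
      intro k hk
      simp only [ha]
      split_ifs with h
      · rw [norm_zero]; positivity
      · refine (norm_div_torusChar_sub_one_le hν hk (hdio k h) (hdecay k)).trans (le_of_eq ?_)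
        ring)
  refine ⟨reSeries a, reSeries p, continuous_reSeries has, continuous_reSeries hps,
    reSeries_add_int, reSeries_add_int, ?_, ?_, ?_, ?_, ?_⟩
  · intro k hk
    rw [fourierCoef_reSeries hps]
    have h1 : k ∉ Γ := hk
    simp [hp, h1, hΓneg' k h1]
  · intro k hk
    rw [fourierCoef_reSeries has]
    have h1 : k ∈ Γ := hk
    simp [ha, h1, hΓneg k h1]
  · intro θ
    have h1 := (hasSum_series has (θ + Ω₀)).sub (hasSum_series has θ)
    have h2 := (hasSum_fourierCoef hf hper hsf θ).sub (hasSum_series hps θ)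
    have h3 : ∀ k, a k * torusChar k (θ + Ω₀) - a k * torusChar k θ =
        fourierCoef f k * torusChar k θ - p k * torusChar k θ := by
      intro k
      by_cases h : k ∈ Γ
      · simp [ha, hp, h]
      · have h4 : torusChar k Ω₀ - 1 ≠ 0 := by
          have hN : 0 < ∑ i, |(k i : ℝ)| := by linarith [one_le_sum_abs (hne k h)]
          have h5 := le_norm_exp_sub_one (hdio k h)
          exact norm_pos_iff.1 (lt_of_lt_of_le (by positivity) h5)
        simp only [ha, hp, if_neg h, torusChar_add]
        field_simp
        ring
    have h6 := h1.unique (h2.congr_fun h3)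
    have h7 := congrArg Complex.re h6
    simpa only [reSeries, Complex.sub_re, Complex.ofReal_re] using h7
  · intro k
    rw [fourierCoef_reSeries hps, norm_div, Complex.norm_two, div_le_iff₀ two_pos]
    have h1 := norm_add_le (p k) ((starRingEnd ℂ) (p (-k)))
    rw [RCLike.norm_conj] at h1
    have h2 := hpbound (-k)
    simp only [Pi.neg_apply, Int.cast_neg, abs_neg] at h2
    linarith [hpbound k]
  · intro θ
    refine (abs_reSeries_le has θ).trans (hatsum.trans (le_of_eq ?_))
    ring
end

section
/- Let d ≥ 2, let ω ∈ ℝ^{d−1} satisfy the Diophantine condition of type (ν,τ), let L₁ ∈ ℤ^{d−1}, L₂ ∈ ℤ, and let g: ℝ^{d−1} × ℝ → ℝ be C^∞ and ℤ^{d−1} × ℤ-periodic. Assume there exists y₀ ∈ ℝ such that ∫_{[0,1]^{d−1}} g(σ, y₀) dσ = 0 and ∫_{[0,1]^{d−1}} ∂_y g(σ, y₀) dσ ≠ 0. For ε > 0 define F_ε(x,y) = (x + ω + ε(ω+L₁)g(x,y), y + ε·L₂·g(x,y)). Then there exists a sequence of C^∞ maps l_j = (l_j^x, l_j^y): ℝ^{d−1}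 → ℝ^{d−1} × ℝ (j ≥ 0), with l_0(σ) = (σ, y₀) and l_j ℤ^{d−1}-periodic for every j ≥ 1, such that for every N ∈ ℕ there is a constant C_N with: for all ε ∈ (0,1] and all σ ∈ ℝ^{d−1}, |F_ε(l^{≤N}(σ)) − l^{≤N}(σ+ω)| ≤ C_N · ε^{N+1}, where l^{≤N}(σ) = Σ_{j=0}^{N} ε^j l_j(σ). (Lindstedt series for the resonant invariant surface of a foliation preserving torus map; note the internal dynamics is the unperturbed rotation σ ↦ σ+ω to all orders.) -/
open scoped BigOperators
open MeasureTheory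

/-!
Write `v = (ω + L₁, L₂)`, so that `F_ε(p) = p + (ω, 0) + ε g(p) v`: the perturbation always points
in the fixed direction `v`. The coefficients are built by induction on the order, keeping a smooth
truncation `P(ε, σ)` together with an exact formula for its defect,

  `F_ε(P(ε, σ)) - P(ε, σ + ω) = ε ^ (N + 1) S(ε, σ) v`,

where `S` is jointly smooth, periodic in `σ`, and `S(0, ·)` has zero average (`ApproxInvariant`).

For the inductive step (`ApproxInvariant.step`) one adds `ε ^ (N + 1) l(σ)` with
`l = u v + c (0, 1)`. The function `u` solves the cohomological equation
`u(σ + ω) - u(σ) = S(0, σ)`, which removes the leading part of the defect. Hadamard's lemma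
(`hadamard`: a smooth `f(t, x)` equals `f(0, x) + t r(t, x)` with `r` smooth) shows that what
remains is `ε ^ (N + 2) S'(ε, σ) v` with
`S'(0, σ) = R(0, σ) + Dg(σ, y₀)(u(σ) v) + c ∂_y g(σ, y₀)`, where `S(ε, σ) = S(0, σ) + ε R(ε, σ)`.
Since `∂_y g(·, y₀)` has nonzero average, the constant `c` can be chosen to make the average of
`S'(0, ·)` vanish, and the induction continues. The error bound follows because a continuous
periodic `S` is bounded on `[0, 1] × ℝ^s`.

The cohomological equation (`cohomological`) is solved by Fourier series: coefficients of smooth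
periodic functions decay faster than any power (`fc_decay`), and the Diophantine condition bounds
the divisors `exp(2πi k·ω) - 1` below by a power of `‖k‖` (`small_divisor`), so the formal
solution converges together with all its derivatives.
-/

/-! ### Smooth dependence on parameters -/

/-- Integrating a `C^m` function over the last variable in `[0, 1]` gives a `C^m` function. The
family of target spaces is quantified inside the induction, because the derivative takes values in
a space of linear maps. -/
theorem contDiff_integral_nat {X : Type} [NormedAddCommGroup X] [NormedSpace ℝ X]
    [FiniteDimensional ℝ X] (m : ℕ) :
    ∀ {V : Type} [NormedAddCommGroup V] [NormedSpace ℝ V] [CompleteSpace V]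
      (f : X × ℝ → V), ContDiff ℝ m f →
      ContDiff ℝ m (fun x => ∫ t in (0 : ℝ)..1, f (x, t)) := by
  induction m with
  | zero =>
    intro V _ _ _ f hf
    have hc : Continuous f := hf.continuous
    refine contDiff_zero.2 ?_
    exact intervalIntegral.continuous_parametric_intervalIntegral_of_continuous' (by fun_prop) _ _
  | succ m ih =>
    intro V _ _ _ f hf
    have hf1 : ContDiff ℝ 1 f := hf.of_le (by norm_cast; omega)
    have hfd : ContDiff ℝ m (fun p : X × ℝ =>
        (fderiv ℝ f p).comp (ContinuousLinearMap.inl ℝ X ℝ)) := by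
      have := hf.fderiv_right (m := (m : WithTop ℕ∞)) (by norm_cast)
      exact this.clm_comp contDiff_const
    have hd : Continuous (fun p : X × ℝ =>
        (fderiv ℝ f p).comp (ContinuousLinearMap.inl ℝ X ℝ)) := hfd.continuous
    have hcf : Continuous f := hf.continuous
    push_cast
    rw [contDiff_succ_iff_hasFDerivAt]
    refine ⟨fun x => ∫ t in (0 : ℝ)..1,
      (fderiv ℝ f (x, t)).comp (ContinuousLinearMap.inl ℝ X ℝ), ih _ hfd, fun x₀ => ?_⟩
    obtain ⟨C, hC⟩ := ((isCompact_closedBall x₀ 1).prod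
      (isCompact_Icc (a := (0:ℝ)) (b := 1))).exists_bound_of_continuousOn hd.continuousOn
    have key := intervalIntegral.hasFDerivAt_integral_of_dominated_of_fderiv_le (𝕜 := ℝ)
      (μ := volume) (a := (0:ℝ)) (b := 1) (F := fun x t => f (x, t))
      (F' := fun x t => (fderiv ℝ f (x, t)).comp (ContinuousLinearMap.inl ℝ X ℝ))
      (bound := fun _ => C) (x₀ := x₀) (Metric.closedBall_mem_nhds x₀ one_pos)
      ?_ ?_ ?_ ?_ ?_ ?_
    · exact key
    · refine Filter.Eventually.of_forall fun x => ?_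
      exact Continuous.aestronglyMeasurable (by fun_prop)
    · exact Continuous.intervalIntegrable (by fun_prop) _ _
    · exact Continuous.aestronglyMeasurable
        (hd.comp (by fun_prop : Continuous (fun t : ℝ => (x₀, t))))
    · refine Filter.Eventually.of_forall fun t ht x hx => ?_
      rw [Set.uIoc_of_le zero_le_one] at ht
      exact hC (x, t) ⟨hx, ⟨ht.1.le, ht.2⟩⟩
    · exact continuous_const.intervalIntegrable _ _
    · refine Filter.Eventually.of_forall fun t _ x _ => ?_
      have h1 : HasFDerivAt f (fderiv ℝ f (x, t)) (x, t) :=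
        (hf1.differentiable (by simp) _).hasFDerivAt
      exact h1.comp x (hasFDerivAt_prodMk_left x t)

theorem contDiff_integral_smooth {X : Type} [NormedAddCommGroup X] [NormedSpace ℝ X]
    [FiniteDimensional ℝ X] (f : X × ℝ → ℝ) (hf : ContDiff ℝ (⊤ : ℕ∞) f) :
    ContDiff ℝ (⊤ : ℕ∞) (fun x => ∫ t in (0 : ℝ)..1, f (x, t)) :=
  contDiff_infty.2 fun m => contDiff_integral_nat m f (contDiff_infty.1 hf m)

/-- Hadamard's lemma with parameters. The quotient `r` is given by `∫₀¹ ∂ₜf(s t, x) ds`, so it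
inherits every symmetry of `f` in the parameter `x`. -/
theorem hadamard {X : Type} [NormedAddCommGroup X] [NormedSpace ℝ X]
    [FiniteDimensional ℝ X] (f : ℝ × X → ℝ) (hf : ContDiff ℝ (⊤ : ℕ∞) f) :
    ∃ r : ℝ × X → ℝ, ContDiff ℝ (⊤ : ℕ∞) r ∧
      (∀ t x, f (t, x) = f (0, x) + t * r (t, x)) ∧
      (∀ x, HasDerivAt (fun s => f (s, x)) (r (0, x)) 0) ∧
      (∀ (τ : X → X), (∀ t x, f (t, τ x) = f (t, x)) → ∀ t x, r (t, τ x) = r (t, x)) := by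
  have hd (t : ℝ) (x : X) :
      HasDerivAt (fun s => f (s, x)) (fderiv ℝ f (t, x) (1, 0)) t := by
    have h1 : HasFDerivAt f (fderiv ℝ f (t, x)) (t, x) :=
      (hf.differentiable (by simp) _).hasFDerivAt
    have h2 : HasDerivAt (fun s : ℝ => (s, x)) ((1 : ℝ), (0 : X)) t :=
      (hasDerivAt_id t).prodMk (hasDerivAt_const t x)
    exact h1.comp_hasDerivAt t h2
  have hsm : ContDiff ℝ (⊤ : ℕ∞) (fun p : ℝ × X => fderiv ℝ f p (1, 0)) :=
    (hf.fderiv_right (m := ((⊤ : ℕ∞) : WithTop ℕ∞)) (by norm_cast)).clm_apply contDiff_const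
  refine ⟨fun p => ∫ s in (0:ℝ)..1, fderiv ℝ f (s * p.1, p.2) (1, 0), ?_, ?_, ?_, ?_⟩
  · exact contDiff_integral_smooth
      (fun q : (ℝ × X) × ℝ => fderiv ℝ f (q.2 * q.1.1, q.1.2) (1, 0))
      (hsm.comp (g := fun p : ℝ × X => fderiv ℝ f p (1, 0))
        (f := fun q : (ℝ × X) × ℝ => (q.2 * q.1.1, q.1.2)) (by fun_prop))
  · intro t x
    have h1 : ∀ s ∈ Set.uIcc (0:ℝ) 1, HasDerivAt (fun s => f (s * t, x))
        (t * fderiv ℝ f (s * t, x) (1, 0)) s := by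
      intro s _
      have h2 : HasDerivAt (fun s : ℝ => s * t) t s := by
        simpa using (hasDerivAt_id s).mul_const t
      simpa [mul_comm, Function.comp_def] using (hd (s * t) x).comp s h2
    have h3 := intervalIntegral.integral_eq_sub_of_hasDerivAt h1 (by
      apply Continuous.intervalIntegrable
      have := hsm.continuous
      exact continuous_const.mul (this.comp (by fun_prop : Continuous fun s : ℝ => (s * t, x))))
    rw [intervalIntegral.integral_const_mul] at h3
    simp only [one_mul, zero_mul] at h3
    simp only
    linarith
  · intro x
    simpa using hd 0 x
  · intro τ hτ t x
    have : ∀ t, fderiv ℝ f (t, τ x) (1, 0) = fderiv ℝ f (t, x) (1, 0) := by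
      intro t
      rw [← (hd t (τ x)).deriv, ← (hd t x).deriv]
      simp only [hτ]
    simp only [this]

/-! ### Characters of the torus -/

/-- The vector of reals underlying an integer vector. -/
def intVec {s : ℕ} (k : Fin s → ℤ) : Fin s → ℝ := fun i => (k i : ℝ)

/-- The linear form `x ↦ 2π k·x`. -/
noncomputable def phase {s : ℕ} (k : Fin s → ℤ) : (Fin s → ℝ) →L[ℝ] ℝ :=
  ∑ i, ((2 * Real.pi * (k i : ℝ)) • ContinuousLinearMap.proj (R := ℝ) (φ := fun _ => ℝ) i)

theorem phase_apply {s : ℕ} (k : Fin s → ℤ) (x : Fin s → ℝ) :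
    phase k x = 2 * Real.pi * ∑ i, (k i : ℝ) * x i := by
  simp [phase, Finset.mul_sum, mul_assoc]

/-- The character `x ↦ exp(2πi k·x)` of the torus, as a function on `ℝ^s`. -/
noncomputable def chi {s : ℕ} (k : Fin s → ℤ) (x : Fin s → ℝ) : ℂ :=
  Complex.exp (Complex.I * (phase k x : ℝ))

theorem chi_norm {s : ℕ} (k : Fin s → ℤ) (x : Fin s → ℝ) : ‖chi k x‖ = 1 := by
  rw [chi, mul_comm]; exact Complex.norm_exp_ofReal_mul_I _

theorem chi_add {s : ℕ} (k : Fin s → ℤ) (x y : Fin s → ℝ) :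
    chi k (x + y) = chi k x * chi k y := by
  simp [chi, ← Complex.exp_add, mul_add]

theorem chi_intVec {s : ℕ} (k m : Fin s → ℤ) : chi k (intVec m) = 1 := by
  rw [chi, phase_apply, Complex.exp_eq_one_iff]
  refine ⟨∑ i, k i * m i, ?_⟩
  simp only [intVec]
  push_cast
  ring

/-- On the image of `ℝ^s` in the torus, Mathlib's monomial `mFourier k` is `chi k`. -/
theorem chi_mFourier {s : ℕ} (k : Fin s → ℤ) (x : Fin s → ℝ) :
    UnitAddTorus.mFourier k (fun i => (x i : UnitAddCircle)) = chi k x := by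
  simp only [UnitAddTorus.mFourier, ContinuousMap.coe_mk, chi, phase_apply]
  simp only [fourier_coe_apply, ← Complex.exp_sum]
  congr 1
  push_cast
  rw [Finset.mul_sum, Finset.mul_sum]
  refine Finset.sum_congr rfl fun i _ => ?_
  simp; ring

theorem contDiff_chi {s : ℕ} (k : Fin s → ℤ) : ContDiff ℝ (⊤ : ℕ∞) (chi k) := by
  unfold chi
  have h1 : ContDiff ℝ (⊤ : ℕ∞) (fun x => ((phase k x : ℝ) : ℂ)) :=
    Complex.ofRealCLM.contDiff.comp (phase k).contDiff
  exact Complex.contDiff_exp.comp (contDiff_const.mul h1)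

theorem hasFDerivAt_chi {s : ℕ} (k : Fin s → ℤ) (x : Fin s → ℝ) :
    HasFDerivAt (chi k) ((chi k x * Complex.I) • (Complex.ofRealCLM.comp (phase k))) x := by
  have h1 : HasFDerivAt (fun x => ((phase k x : ℝ) : ℂ)) (Complex.ofRealCLM.comp (phase k)) x :=
    (Complex.ofRealCLM.comp (phase k)).hasFDerivAt
  have := (h1.const_mul Complex.I).cexp
  rw [smul_smul] at this
  exact this

/-- The character is `t ↦ exp(i t)`, all of whose derivatives have norm one, composed with
the linear form `phase k`. -/
theorem norm_iteratedFDeriv_chi {s : ℕ} (k : Fin s → ℤ) (x : Fin s → ℝ) (m : ℕ) :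
    ‖iteratedFDeriv ℝ m (chi k) x‖ ≤ ‖phase k‖ ^ m := by
  have hφ : ContDiff ℝ (⊤ : ℕ∞) (fun t : ℝ => Complex.exp (Complex.I * (t : ℂ))) :=
    Complex.contDiff_exp.comp (contDiff_const.mul Complex.ofRealCLM.contDiff)
  have hd : ∀ m : ℕ, iteratedDeriv m (fun t : ℝ => Complex.exp (Complex.I * (t : ℂ)))
      = fun t : ℝ => Complex.I ^ m * Complex.exp (Complex.I * (t : ℂ)) := by
    intro m
    induction m with
    | zero => simp
    | succ m ih =>
      rw [iteratedDeriv_succ, ih]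
      ext t
      have h1 : HasDerivAt (fun t : ℝ => (t : ℂ)) 1 t := Complex.ofRealCLM.hasDerivAt
      have := ((h1.const_mul Complex.I).cexp.const_mul (Complex.I ^ m)).deriv
      rw [this]; ring
  have := (phase k).iteratedFDeriv_comp_right (f := fun t : ℝ => Complex.exp (Complex.I * (t : ℂ)))
    hφ x (i := m) (by exact_mod_cast le_top)
  change ‖iteratedFDeriv ℝ m ((fun t : ℝ => Complex.exp (Complex.I * (t : ℂ))) ∘ (phase k)) x‖ ≤ _
  rw [this]
  refine (ContinuousMultilinearMap.norm_compContinuousLinearMap_le _ _).trans ?_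
  rw [norm_iteratedFDeriv_eq_norm_iteratedDeriv, hd]
  have : ‖Complex.exp (Complex.I * ((phase k x : ℝ) : ℂ))‖ = 1 := chi_norm k x
  simp [this]

theorem phase_norm_le {s : ℕ} (k : Fin s → ℤ) : ‖phase k‖ ≤ 2 * Real.pi * s * ‖k‖ := by
  refine ContinuousLinearMap.opNorm_le_bound _ (by positivity) fun x => ?_
  rw [phase_apply, norm_mul, Real.norm_of_nonneg (by positivity)]
  have : ‖∑ i, (k i : ℝ) * x i‖ ≤ ∑ i : Fin s, ‖k‖ * ‖x‖ := by
    refine norm_sum_le_of_le _ fun i _ => ?_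
    rw [norm_mul]
    gcongr
    · exact norm_le_pi_norm k i
    · exact norm_le_pi_norm x i
  simp at this
  calc 2 * Real.pi * ‖∑ i, (k i : ℝ) * x i‖ ≤ 2 * Real.pi * (s * (‖k‖ * ‖x‖)) := by gcongr; simpa using this
    _ = _ := by ring

/-! ### Fourier coefficients of smooth periodic functions -/

/-- The divergence theorem on the unit cube: the contributions of opposite faces cancel by
periodicity. -/
theorem integral_deriv_periodic {n : ℕ} (f : (Fin (n+1) → ℝ) → ℂ) (hf : ContDiff ℝ (⊤ : ℕ∞) f)
    (hper : ∀ x k, f (x + intVec k) = f x) (i : Fin (n+1)) :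
    ∫ x in Set.Icc (0 : Fin (n+1) → ℝ) 1, fderiv ℝ f x (Pi.single i 1) = 0 := by
  have hfd : Continuous (fun x => fderiv ℝ f x (Pi.single i 1)) :=
    (hf.continuous_fderiv (by simp)).clm_apply continuous_const
  have hdiv := integral_divergence_of_hasFDerivAt_off_countable' (0 : Fin (n+1) → ℝ) 1
    zero_le_one (fun j x => if j = i then f x else 0)
    (fun j x => if j = i then fderiv ℝ f x else 0) ∅ Set.countable_empty
    (by
      intro j
      by_cases h : j = i
      · simp [h, hf.continuous.continuousOn]
      · simp [h, continuousOn_const])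
    (by
      intro x _ j
      by_cases h : j = i
      · simpa [h] using (hf.differentiable (by simp) x).hasFDerivAt
      · simpa [h] using hasFDerivAt_const (0:ℂ) x)
    (by
      have : (fun x => ∑ j, (if j = i then fderiv ℝ f x else 0) (Pi.single j 1))
          = fun x => fderiv ℝ f x (Pi.single i 1) := by
        ext x
        rw [Finset.sum_eq_single i] <;> simp +contextual
      rw [this]
      exact hfd.continuousOn.integrableOn_compact isCompact_Icc)
  have h1 : ∀ x, ∑ j, (if j = i then fderiv ℝ f x else 0) (Pi.single j 1)
      = fderiv ℝ f x (Pi.single i 1) := by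
    intro x
    rw [Finset.sum_eq_single i] <;> simp +contextual
  simp only [h1] at hdiv
  rw [hdiv]
  refine Finset.sum_eq_zero fun j _ => ?_
  by_cases h : j = i
  · subst h
    simp only [if_true]
    rw [sub_eq_zero]
    congr 1
    ext x
    have : (Fin.insertNth j ((1 : Fin (n+1) → ℝ) j) x : Fin (n+1) → ℝ)
        = Fin.insertNth j ((0 : Fin (n+1) → ℝ) j) x + intVec (Pi.single j 1) := by
      ext l
      refine Fin.succAboveCases j ?_ (fun l => ?_) l
      · simp [intVec]
      · simp [intVec, Fin.succAbove_ne]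
    rw [this, hper]
  · simp [h]

/-- The `k`-th Fourier coefficient of a periodic function on `ℝ^s`, as an integral over the unit
cube. -/
noncomputable def fc {s : ℕ} (h : (Fin s → ℝ) → ℂ) (k : Fin s → ℤ) : ℂ :=
  ∫ x in Set.Icc (0 : Fin s → ℝ) 1, chi (-k) x * h x

theorem phase_single {s : ℕ} (k : Fin s → ℤ) (i : Fin s) :
    phase k (Pi.single i 1) = 2 * Real.pi * k i := by
  rw [phase_apply]
  congr 1
  rw [Finset.sum_eq_single i] <;> simp +contextual

/-- Integration by parts: a partial derivative multiplies the `k`-th coefficient by `2πi kᵢ`. -/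
theorem fc_deriv {n : ℕ} (h : (Fin (n+1) → ℝ) → ℂ) (hh : ContDiff ℝ (⊤ : ℕ∞) h)
    (hper : ∀ x k, h (x + intVec k) = h x) (i : Fin (n+1)) (k : Fin (n+1) → ℤ) :
    fc (fun x => fderiv ℝ h x (Pi.single i 1)) k
      = (2 * Real.pi * k i * Complex.I) * fc h k := by
  have hsm := (contDiff_chi (-k)).mul hh
  have h0 := integral_deriv_periodic (fun x => chi (-k) x * h x) hsm
    (fun x m => by rw [chi_add, chi_intVec, mul_one, hper]) i
  have hc1 : Continuous (fun x => chi (-k) x * fderiv ℝ h x (Pi.single i 1)) :=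
    (contDiff_chi (-k)).continuous.mul
      ((hh.continuous_fderiv (by simp)).clm_apply continuous_const)
  have hc2 : Continuous (fun x => chi (-k) x * h x) := hsm.continuous
  have hder : ∀ x, fderiv ℝ (fun x => chi (-k) x * h x) x (Pi.single i 1)
      = chi (-k) x * fderiv ℝ h x (Pi.single i 1)
        - (2 * Real.pi * k i * Complex.I) * (chi (-k) x * h x) := by
    intro x
    have hp : HasFDerivAt (fun x => chi (-k) x * h x) _ x :=
      (hasFDerivAt_chi (-k) x).mul (hh.differentiable (by simp) x).hasFDerivAt
    rw [hp.fderiv]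
    simp [phase_single]
    ring
  simp only [hder] at h0
  have hc3 : Continuous (fun x => (2 * Real.pi * k i * Complex.I) * (chi (-k) x * h x)) :=
    continuous_const.mul hc2
  rw [integral_sub (hc1.continuousOn.integrableOn_compact isCompact_Icc)
    (hc3.continuousOn.integrableOn_compact isCompact_Icc), integral_const_mul, sub_eq_zero] at h0
  exact h0

theorem fc_decay_coord {n : ℕ} (i : Fin (n+1)) (m : ℕ) :
    ∀ (h : (Fin (n+1) → ℝ) → ℂ), ContDiff ℝ (⊤ : ℕ∞) h →
    (∀ x k, h (x + intVec k) = h x) →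
    ∃ C : ℝ, ∀ k : Fin (n+1) → ℤ, |(k i : ℝ)| ^ m * ‖fc h k‖ ≤ C := by
  induction m with
  | zero =>
    intro h hh hper
    refine ⟨∫ x in Set.Icc (0 : Fin (n+1) → ℝ) 1, ‖h x‖, fun k => ?_⟩
    simp only [pow_zero, one_mul]
    refine (norm_integral_le_integral_norm _).trans (le_of_eq ?_)
    simp [chi_norm]
  | succ m ih =>
    intro h hh hper
    obtain ⟨C, hC⟩ := ih (fun x => fderiv ℝ h x (Pi.single i 1))
      ((hh.fderiv_right (m := ((⊤ : ℕ∞) : WithTop ℕ∞)) (by norm_cast)).clm_apply contDiff_const)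
      (fun x k => by
        have : fderiv ℝ (fun y => h (y + intVec k)) x = fderiv ℝ h (x + intVec k) :=
          fderiv_comp_add_right _
        simp only [← this, hper])
    refine ⟨C, fun k => le_trans ?_ (hC k)⟩
    rw [fc_deriv h hh hper, norm_mul, pow_succ]
    simp only [norm_mul, Complex.norm_I, Complex.norm_intCast, Complex.norm_real]
    have h1 : ‖(2:ℂ)‖ * ‖Real.pi‖ * |(k i : ℝ)| * 1 ≥ |(k i : ℝ)| := by
      rw [Real.norm_of_nonneg Real.pi_pos.le]
      have := Real.pi_gt_three
      have h2 := abs_nonneg (k i : ℝ)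
      simp
      nlinarith
    rw [mul_assoc]
    gcongr

/-- Rapid decay of the Fourier coefficients, measured in the sup norm of the frequency. -/
theorem fc_decay {n : ℕ} (m : ℕ) (h : (Fin (n+1) → ℝ) → ℂ) (hh : ContDiff ℝ (⊤ : ℕ∞) h)
    (hper : ∀ x k, h (x + intVec k) = h x) :
    ∃ C : ℝ, 0 ≤ C ∧ ∀ k : Fin (n+1) → ℤ, ‖k‖ ^ m * ‖fc h k‖ ≤ C := by
  choose C hC using fun i => fc_decay_coord (n := n) i m h hh hper
  have hC0 : ∀ i, 0 ≤ C i := fun i => le_trans (by positivity) (hC i 0)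
  refine ⟨∑ i, C i, Finset.sum_nonneg fun i _ => hC0 i, fun k => ?_⟩
  obtain ⟨i, hi⟩ := Finset.exists_mem_eq_sup' (Finset.univ_nonempty (α := Fin (n+1))) (fun i => ‖k i‖₊)
  have : ‖k‖ = |(k i : ℝ)| := by
    rw [← Int.norm_eq_abs, ← coe_nnnorm, ← coe_nnnorm, Pi.nnnorm_def, ← hi.2, Finset.sup'_eq_sup]
  rw [this]
  exact (hC i k).trans (Finset.single_le_sum (fun i _ => hC0 i) (Finset.mem_univ i))

theorem summable_int_norm {s : ℕ} (m : ℕ) (hm : s < m) :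
    Summable (fun k : Fin s → ℤ => (‖k‖ ^ m)⁻¹) := by
  let b := Pi.basisFun ℝ (Fin s)
  let L : Submodule ℤ (Fin s → ℝ) := Submodule.span ℤ (Set.range b)
  have hfr : Module.finrank ℤ L = s := by
    rw [ZLattice.rank ℝ L]; simp
  have h := ZLattice.summable_norm_pow_inv L m (by omega)
  have hmem : ∀ k : Fin s → ℤ, intVec k ∈ L := by
    intro k
    refine (b.mem_span_iff_repr_mem ℤ _).2 fun i => ?_
    exact ⟨k i, by simp [b, intVec]⟩
  have := h.comp_injective (i := fun k : Fin s → ℤ => (⟨intVec k, hmem k⟩ : L)) (by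
    intro k k' hk
    ext i
    have := congrFun (congrArg Subtype.val hk) i
    simpa [intVec] using this)
  refine this.congr fun k => ?_
  have : ‖intVec k‖ = ‖k‖ := by
    simp only [← coe_nnnorm, Pi.nnnorm_def, intVec]
    congr 2
  simp [this]

/-- Pointwise Fourier inversion: the periodic function descends to the torus, where Mathlib's
multidimensional Fourier series applies. -/
theorem hasSum_fc {n : ℕ} (h : (Fin (n+1) → ℝ) → ℂ) (hh : ContDiff ℝ (⊤ : ℕ∞) h)
    (hper : ∀ x k, h (x + intVec k) = h x) (x : Fin (n+1) → ℝ) :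
    HasSum (fun k => fc h k * chi k x) (h x) := by
  let π : C(Fin (n+1) → ℝ, UnitAddTorus (Fin (n+1))) :=
    ⟨fun x i => (x i : UnitAddCircle), by
      refine continuous_pi fun i => ?_
      exact (AddCircle.continuous_mk' 1).comp (continuous_apply i)⟩
  have hπ : Topology.IsQuotientMap π := by
    have h1 : IsOpenQuotientMap ((↑) : ℝ → UnitAddCircle) := QuotientAddGroup.isOpenQuotientMap_mk
    exact (IsOpenQuotientMap.piMap (fun _ : Fin (n+1) => h1)).isQuotientMap
  have hlift : ∀ a b, π a = π b → h a = h b := by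
    intro a b hab
    have h1 : ∀ i, ∃ m : ℤ, a i = b i + m := by
      intro i
      have h2 : ((a i : ℝ) : UnitAddCircle) = (b i : ℝ) := congrFun hab i
      obtain ⟨m, hm⟩ := AddSubgroup.mem_zmultiples_iff.1 (QuotientAddGroup.eq.1 h2)
      refine ⟨-m, ?_⟩
      rw [zsmul_one] at hm
      push_cast
      linarith
    choose m hm using h1
    have : a = b + intVec m := by ext i; simp [hm, intVec]
    rw [this, hper]
  let H : C(UnitAddTorus (Fin (n+1)), ℂ) := hπ.lift ⟨h, hh.continuous⟩ hlift
  have hH : ∀ x, H (fun i => (x i : UnitAddCircle)) = h x := by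
    intro x
    have := hπ.lift_comp ⟨h, hh.continuous⟩ hlift
    exact DFunLike.congr_fun this x
  have hcoef : ∀ k, UnitAddTorus.mFourierCoeff H k = fc h k := by
    intro k
    rw [UnitAddTorus.mFourierCoeff_eq_integral H k 0, fc]
    simp only [hH, chi_mFourier, smul_eq_mul]
    rw [volume_pi, ← setIntegral_congr_set Measure.univ_pi_Ioc_ae_eq_Icc]
    congr 2
    ext x
    simp
  have hsum : Summable (fc h) := by
    obtain ⟨C, hC0, hC⟩ := fc_decay (n + 2) h hh hper
    have h1 := (summable_int_norm (s := n+1) (n+2) (by omega)).mul_left C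
    refine Summable.of_norm_bounded_eventually h1 ?_
    refine (Set.finite_singleton (0 : Fin (n+1) → ℤ)).subset ?_
    intro k hk
    by_contra hk0
    apply hk
    have : 0 < ‖k‖ := norm_pos_iff.2 hk0
    change ‖fc h k‖ ≤ C * (‖k‖ ^ (n + 2))⁻¹
    rw [← div_eq_mul_inv, le_div_iff₀ (by positivity), mul_comm]
    exact hC k
  have := UnitAddTorus.hasSum_mFourier_series_apply_of_summable (f := H)
    (by rw [funext hcoef]; exact hsum) (fun i => (x i : UnitAddCircle))
  simpa only [hcoef, hH, chi_mFourier, smul_eq_mul] using this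

/-- The distance from `exp(2πi x)` to `1` dominates the distance from `x` to the integers. -/
theorem small_divisor {s : ℕ} (ω : Fin s → ℝ) (k : Fin s → ℤ) (δ : ℝ)
    (h : ∀ n : ℤ, δ ≤ |(∑ i, (k i : ℝ) * ω i) - (n : ℝ)|) :
    δ ≤ ‖chi k ω - 1‖ := by
  set x : ℝ := ∑ i, (k i : ℝ) * ω i with hx
  have h1 := h (round x)
  set y : ℝ := x - round x with hy
  have hyle : |y| ≤ 1 / 2 := abs_sub_round x
  have hchi : chi k ω = Complex.exp (Complex.I * ((2 * Real.pi * y : ℝ) : ℂ)) := by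
    rw [chi, phase_apply, ← hx, Complex.exp_eq_exp_iff_exists_int]
    refine ⟨round x, ?_⟩
    rw [hy]; push_cast; ring
  rw [hchi, Complex.norm_exp_I_mul_ofReal_sub_one]
  have h2 : 2 * Real.pi * y / 2 = Real.pi * y := by ring
  rw [h2, norm_mul, Real.norm_eq_abs, Real.norm_eq_abs]
  have hpi := Real.pi_pos
  have h3 := Real.mul_abs_le_abs_sin (x := Real.pi * y) (by
    rw [abs_mul, abs_of_pos hpi]; nlinarith)
  rw [abs_mul, abs_of_pos hpi] at h3
  have h4 : 2 / Real.pi * (Real.pi * |y|) = 2 * |y| := by field_simp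
  rw [h4] at h3
  have := abs_nonneg y
  rw [abs_of_pos (by norm_num : (0:ℝ) < 2)]
  linarith

/-! ### The cohomological equation -/

/-- Smooth solution of `u(x + ω) - u(x) = h(x)` for `h` of zero average and Diophantine `ω`. -/
theorem cohomological {n : ℕ} (ν τ : ℝ) (hν : 0 < ν) (hτ : 0 < τ) (ω : Fin (n+1) → ℝ)
    (hdio : ∀ k : Fin (n+1) → ℤ, k ≠ 0 → ∀ m : ℤ,
      ν * (∑ i, |(k i : ℝ)|) ^ (-τ) ≤ |(∑ i, (k i : ℝ) * ω i) - (m : ℝ)|)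
    (h : (Fin (n+1) → ℝ) → ℝ) (hh : ContDiff ℝ (⊤ : ℕ∞) h)
    (hper : ∀ x k, h (x + intVec k) = h x)
    (havg : ∫ x in Set.Icc (0 : Fin (n+1) → ℝ) 1, h x = 0) :
    ∃ u : (Fin (n+1) → ℝ) → ℝ, ContDiff ℝ (⊤ : ℕ∞) u ∧ (∀ x k, u (x + intVec k) = u x) ∧
      ∀ x, u (x + ω) - u x = h x := by
  let H : (Fin (n+1) → ℝ) → ℂ := fun x => (h x : ℂ)
  have hH : ContDiff ℝ (⊤ : ℕ∞) H := Complex.ofRealCLM.contDiff.comp hh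
  have hHper : ∀ x k, H (x + intVec k) = H x := fun x k => by simp [H, hper]
  have hfc0 : fc H 0 = 0 := by
    have : ∀ x : Fin (n+1) → ℝ, chi (-0) x = 1 := by simp [chi, phase_apply]
    simp only [fc, this, one_mul, H]
    rw [integral_complex_ofReal, havg]; simp
  -- An integer exponent above `τ`, so that only natural powers of `‖k‖` occur below.
  let T : ℕ := ⌈τ⌉₊
  have hdiv : ∀ k : Fin (n+1) → ℤ, k ≠ 0 →
      ν * (((n + 1 : ℕ) * ‖k‖) ^ T)⁻¹ ≤ ‖chi k ω - 1‖ := by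
    intro k hk
    refine le_trans ?_ (small_divisor ω k _ (hdio k hk))
    have hk1 : 1 ≤ ‖k‖ := by
      obtain ⟨i, hi⟩ := Function.ne_iff.1 hk
      refine le_trans ?_ (norm_le_pi_norm k i)
      rw [Int.norm_eq_abs]
      exact_mod_cast Int.one_le_abs hi
    have hle : ∑ i, |(k i : ℝ)| ≤ (n + 1 : ℕ) * ‖k‖ := by
      have : ∑ i, |(k i : ℝ)| ≤ ∑ i : Fin (n+1), ‖k‖ :=
        Finset.sum_le_sum fun i _ => by
          rw [← Int.norm_eq_abs]; exact norm_le_pi_norm k i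
      simpa using this
    have hpos : 0 < ∑ i, |(k i : ℝ)| := by
      obtain ⟨i, hi⟩ := Function.ne_iff.1 hk
      exact Finset.sum_pos' (fun i _ => abs_nonneg _) ⟨i, Finset.mem_univ i, by
        have : (k i : ℝ) ≠ 0 := by exact_mod_cast hi
        positivity⟩
    have hone : 1 ≤ ((n + 1 : ℕ) : ℝ) * ‖k‖ := by
      have : (1:ℝ) ≤ (n + 1 : ℕ) := by norm_cast; omega
      nlinarith
    gcongr
    rw [← Real.rpow_natCast, ← Real.rpow_neg (by positivity)]
    calc (((n + 1 : ℕ) : ℝ) * ‖k‖) ^ (-(T : ℝ)) ≤ (((n + 1 : ℕ) : ℝ) * ‖k‖) ^ (-τ) :=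
          Real.rpow_le_rpow_of_exponent_le hone (neg_le_neg (Nat.le_ceil τ))
      _ ≤ _ := Real.rpow_le_rpow_of_nonpos hpos hle (by linarith)
  -- At `k = 0` the divisor vanishes; the value `0` given by division by zero is the right one, since
  -- `fc H 0 = 0`.
  let c : (Fin (n+1) → ℤ) → ℂ := fun k => fc H k / (chi k ω - 1)
  have hc0 : c 0 = 0 := by simp [c, hfc0]
  have hcs : ∀ k, c k * (chi k ω - 1) = fc H k := by
    intro k
    by_cases hk : k = 0
    · rw [hk, hc0, hfc0, zero_mul]
    · have hk' : 0 < ‖k‖ := norm_pos_iff.2 hk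
      have : 0 < ‖chi k ω - 1‖ := lt_of_lt_of_le (by positivity) (hdiv k hk)
      exact div_mul_cancel₀ _ (norm_pos_iff.1 this)
  have hbound : ∀ m : ℕ, ∃ K : ℝ, ∀ k, ‖c k‖ * ‖phase k‖ ^ m ≤ K * (‖k‖ ^ (n + 2))⁻¹ := by
    intro m
    obtain ⟨C, hC0, hC⟩ := fc_decay (T + m + (n + 2)) H hH hHper
    refine ⟨ν⁻¹ * ((n + 1 : ℕ) : ℝ) ^ T * (2 * Real.pi * (n + 1 : ℕ)) ^ m * C, fun k => ?_⟩
    by_cases hk : k = 0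
    · simp [hk, hc0]
    · have hk' : 0 < ‖k‖ := norm_pos_iff.2 hk
      have h1 : ‖c k‖ ≤ ‖fc H k‖ / (ν * (((n + 1 : ℕ) * ‖k‖) ^ T)⁻¹) := by
        simp only [c, norm_div]
        gcongr
        exact hdiv k hk
      have h2 := phase_norm_le k
      have h3 : ‖k‖ ^ (n+2) * (‖k‖ ^ T * ‖k‖ ^ m * ‖fc H k‖) ≤ C := by
        refine le_trans (le_of_eq ?_) (hC k)
        ring
      rw [← div_eq_mul_inv, le_div_iff₀ (by positivity)]
      calc ‖c k‖ * ‖phase k‖ ^ m * ‖k‖ ^ (n + 2)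
          ≤ (‖fc H k‖ / (ν * (((n + 1 : ℕ) * ‖k‖) ^ T)⁻¹))
            * (2 * Real.pi * (n + 1 : ℕ) * ‖k‖) ^ m * ‖k‖ ^ (n + 2) := by gcongr
        _ = ν⁻¹ * ((n + 1 : ℕ) : ℝ) ^ T * (2 * Real.pi * (n + 1 : ℕ)) ^ m *
            (‖k‖ ^ (n+2) * (‖k‖ ^ T * ‖k‖ ^ m * ‖fc H k‖)) := by
          field_simp
          simp only [mul_pow]
          ring
        _ ≤ _ := by gcongr
  have hsm : ∀ m : ℕ, Summable (fun k => ‖c k‖ * ‖phase k‖ ^ m) := by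
    intro m
    obtain ⟨K, hK⟩ := hbound m
    exact Summable.of_nonneg_of_le (fun k => by positivity) hK
      ((summable_int_norm (s := n+1) (n+2) (by omega)).mul_left K)
  let U : (Fin (n+1) → ℝ) → ℂ := fun x => ∑' k, c k * chi k x
  have hU : ContDiff ℝ (⊤ : ℕ∞) U := by
    refine contDiff_tsum (N := ⊤) (v := fun m k => ‖c k‖ * ‖phase k‖ ^ m)
      (fun k => contDiff_const.mul (contDiff_chi k)) (fun m _ => hsm m) ?_
    intro m k x _
    have h1 : iteratedFDeriv ℝ m (fun x => c k * chi k x) x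
        = c k • iteratedFDeriv ℝ m (chi k) x :=
      iteratedFDeriv_const_smul_apply (a := c k)
        (((contDiff_chi k).of_le (by exact_mod_cast le_top)).contDiffAt)
    rw [h1, norm_smul]
    gcongr
    exact norm_iteratedFDeriv_chi k x m
  have hsumU : ∀ x, Summable (fun k => c k * chi k x) := fun x =>
    Summable.of_norm (by simpa [chi_norm] using hsm 0)
  have hcoh : ∀ x, U (x + ω) - U x = H x := by
    intro x
    rw [← ((hsumU (x + ω)).tsum_sub (hsumU x)), ← (hasSum_fc H hH hHper x).tsum_eq]
    refine tsum_congr fun k => ?_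
    rw [chi_add, ← hcs]; ring
  refine ⟨fun x => (U x).re, Complex.reCLM.contDiff.comp hU, fun x k => ?_, fun x => ?_⟩
  · simp only [U, chi_add, chi_intVec, mul_one]
  · rw [← Complex.sub_re, hcoh]; simp [H]

/-! ### Inductive construction -/

/-- `P` is a smooth parametrized surface, starting from `σ ↦ (σ, y₀)` at `ε = 0`, which is
invariant under `p ↦ p + (ω, 0) + ε g(p) v` up to the exact defect `ε ^ (N + 1) S(ε, σ) v`. The
vanishing average of `S(0, ·)` is the solvability condition at the next order. -/
structure ApproxInvariant {n : ℕ} (ω : Fin (n+1) → ℝ) (v : (Fin (n+1) → ℝ) × ℝ)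
    (g : (Fin (n+1) → ℝ) × ℝ → ℝ) (y₀ : ℝ) (N : ℕ)
    (P : ℝ × (Fin (n+1) → ℝ) → (Fin (n+1) → ℝ) × ℝ) (S : ℝ × (Fin (n+1) → ℝ) → ℝ) : Prop where
  smooth_P : ContDiff ℝ (⊤ : ℕ∞) P
  smooth_S : ContDiff ℝ (⊤ : ℕ∞) S
  per_P : ∀ ε σ k, P (ε, σ + intVec k) = P (ε, σ) + (intVec k, 0)
  per_S : ∀ ε σ k, S (ε, σ + intVec k) = S (ε, σ)
  avg : ∫ σ in Set.Icc (0 : Fin (n+1) → ℝ) 1, S (0, σ) = 0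
  base : ∀ σ, P (0, σ) = (σ, y₀)
  eqn : ∀ ε σ, P (ε, σ) + (ω, 0) + (ε * g (P (ε, σ))) • v - P (ε, σ + ω)
    = (ε ^ (N + 1) * S (ε, σ)) • v

/-- The order of invariance of a truncation can be raised by one, by adding a periodic term
`ε ^ (N + 1) l(σ)`. -/
theorem ApproxInvariant.step {n : ℕ} {ν τ : ℝ} (hν : 0 < ν) (hτ : 0 < τ) {ω : Fin (n+1) → ℝ}
    (hdio : ∀ k : Fin (n+1) → ℤ, k ≠ 0 → ∀ m : ℤ,
      ν * (∑ i, |(k i : ℝ)|) ^ (-τ) ≤ |(∑ i, (k i : ℝ) * ω i) - (m : ℝ)|)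
    {v : (Fin (n+1) → ℝ) × ℝ} {g : (Fin (n+1) → ℝ) × ℝ → ℝ} (hg : ContDiff ℝ (⊤ : ℕ∞) g)
    (hgper : ∀ p k, g (p + (intVec k, 0)) = g p) {y₀ : ℝ}
    (hnd : (∫ σ in Set.Icc (0 : Fin (n+1) → ℝ) 1, deriv (fun y => g (σ, y)) y₀) ≠ 0)
    {N : ℕ} {P : ℝ × (Fin (n+1) → ℝ) → (Fin (n+1) → ℝ) × ℝ} {S : ℝ × (Fin (n+1) → ℝ) → ℝ}
    (hI : ApproxInvariant ω v g y₀ N P S) :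
    ∃ (l : (Fin (n+1) → ℝ) → (Fin (n+1) → ℝ) × ℝ) (S' : ℝ × (Fin (n+1) → ℝ) → ℝ),
      ContDiff ℝ (⊤ : ℕ∞) l ∧ (∀ σ k, l (σ + intVec k) = l σ) ∧
      ApproxInvariant ω v g y₀ (N + 1) (fun p => P p + p.1 ^ (N + 1) • l p.2) S' := by
  obtain ⟨R, hR, hRS, -, hRper⟩ := hadamard S hI.smooth_S
  have hRper' : ∀ ε σ k, R (ε, σ + intVec k) = R (ε, σ) := fun ε σ k =>
    hRper (fun σ => σ + intVec k) (fun t x => hI.per_S t x k) ε σ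
  have hS0 : ContDiff ℝ (⊤ : ℕ∞) (fun σ => S (0, σ)) :=
    hI.smooth_S.comp (contDiff_const.prodMk contDiff_id)
  obtain ⟨u, hu, huper, hueq⟩ := cohomological ν τ hν hτ ω hdio (fun σ => S (0, σ)) hS0
    (fun σ k => hI.per_S 0 σ k) hI.avg
  have hgd : ∀ p, HasFDerivAt g (fderiv ℝ g p) p := fun p =>
    (hg.differentiable (by simp) p).hasFDerivAt
  have hdy : ∀ σ, deriv (fun y => g (σ, y)) y₀ = fderiv ℝ g (σ, y₀) (0, 1) := by
    intro σ
    have h2 : HasDerivAt (fun y : ℝ => (σ, y)) ((0 : Fin (n+1) → ℝ), (1:ℝ)) y₀ :=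
      (hasDerivAt_const y₀ σ).prodMk (hasDerivAt_id y₀)
    exact ((hgd (σ, y₀)).comp_hasDerivAt y₀ h2).deriv
  simp only [hdy] at hnd
  set A := ∫ σ in Set.Icc (0 : Fin (n+1) → ℝ) 1, fderiv ℝ g (σ, y₀) (0, 1) with hA
  set B := ∫ σ in Set.Icc (0 : Fin (n+1) → ℝ) 1, (R (0, σ) + fderiv ℝ g (σ, y₀) (u σ • v)) with hB
  -- The constant `-B / A` in the `y` direction makes the average of the new `S` at `ε = 0` vanish.
  let l : (Fin (n+1) → ℝ) → (Fin (n+1) → ℝ) × ℝ := fun σ => u σ • v + (-B / A) • (0, 1)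
  have hl : ContDiff ℝ (⊤ : ℕ∞) l := (hu.smul contDiff_const).add contDiff_const
  have hlper : ∀ σ k, l (σ + intVec k) = l σ := fun σ k => by simp [l, huper]
  have hldiff : ∀ σ, l σ - l (σ + ω) = -(S (0, σ) • v) := by
    intro σ
    have : S (0, σ) = u (σ + ω) - u σ := (hueq σ).symm
    simp only [l, this]
    module
  -- The increment of `g` is expanded in an independent variable `t`, later set to `ε ^ (N + 1)`.
  obtain ⟨r, hr, hrf, hrd, hrper⟩ := hadamard
    (fun q : ℝ × (ℝ × (Fin (n+1) → ℝ)) => g (P q.2 + q.1 • l q.2.2))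
    (hg.comp ((hI.smooth_P.comp contDiff_snd).add
      (contDiff_fst.smul (hl.comp (contDiff_snd.comp contDiff_snd)))))
  have hr0 : ∀ σ, r (0, (0, σ)) = fderiv ℝ g (σ, y₀) (l σ) := by
    intro σ
    refine (hrd (0, σ)).unique ?_
    have h2 : HasDerivAt (fun s : ℝ => P (0, σ) + s • l σ) (l σ) 0 := by
      simpa using ((hasDerivAt_id (0:ℝ)).smul_const (l σ)).const_add (P (0, σ))
    have h3 : HasFDerivAt g (fderiv ℝ g (σ, y₀)) (P (0, σ) + (0:ℝ) • l σ) := by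
      simpa [hI.base] using hgd (σ, y₀)
    exact h3.comp_hasDerivAt (0:ℝ) h2
  refine ⟨l, fun p => R p + r (p.1 ^ (N + 1), p), hl, hlper, ?_⟩
  constructor
  · exact hI.smooth_P.add ((contDiff_fst.pow _).smul (hl.comp contDiff_snd))
  · exact hR.add (hr.comp ((contDiff_fst.pow _).prodMk contDiff_id))
  · intro ε σ k
    simp only [hI.per_P, hlper]
    abel
  · intro ε σ k
    simp only [hRper']
    congr 1
    refine hrper (fun q => (q.1, q.2 + intVec k)) ?_ (ε ^ (N + 1)) (ε, σ)
    rintro t ⟨ε, σ⟩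
    simp only [hI.per_P, hlper]
    rw [add_right_comm, hgper]
  · have hpt : ∀ σ, R (0, σ) + r ((0:ℝ) ^ (N + 1), (0, σ))
        = (R (0, σ) + fderiv ℝ g (σ, y₀) (u σ • v))
          + (-B / A) * fderiv ℝ g (σ, y₀) (0, 1) := by
      intro σ
      rw [zero_pow (Nat.succ_ne_zero N), hr0]
      simp only [l, map_add, map_smul, smul_eq_mul]
      ring
    simp only [hpt]
    have hcd : Continuous (fun σ : Fin (n+1) → ℝ => fderiv ℝ g (σ, y₀)) :=
      (hg.continuous_fderiv (by simp)).comp (by fun_prop)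
    have hc1 : Continuous (fun σ => R (0, σ) + fderiv ℝ g (σ, y₀) (u σ • v)) :=
      (hR.continuous.comp (by fun_prop)).add
        (hcd.clm_apply (hu.continuous.smul continuous_const))
    have hc2 : Continuous (fun σ : Fin (n+1) → ℝ => (-B / A) * fderiv ℝ g (σ, y₀) (0, 1)) :=
      continuous_const.mul (hcd.clm_apply continuous_const)
    rw [integral_add (hc1.continuousOn.integrableOn_compact isCompact_Icc)
      (hc2.continuousOn.integrableOn_compact isCompact_Icc), integral_const_mul, ← hA, ← hB]
    field_simp
    ring
  · intro σ
    simp [hI.base]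
  · intro ε σ
    have h1 := hI.eqn ε σ
    have h2 := hrf (ε ^ (N + 1)) (ε, σ)
    have h3 := hRS ε σ
    have h4 := hldiff σ
    simp only [zero_smul, add_zero] at h2
    simp only [h2]
    calc P (ε, σ) + ε ^ (N + 1) • l σ + (ω, 0)
          + (ε * (g (P (ε, σ)) + ε ^ (N + 1) * r (ε ^ (N + 1), (ε, σ)))) • v
          - (P (ε, σ + ω) + ε ^ (N + 1) • l (σ + ω))
        = (P (ε, σ) + (ω, 0) + (ε * g (P (ε, σ))) • v - P (ε, σ + ω))
          + (ε * (ε ^ (N + 1) * r (ε ^ (N + 1), (ε, σ)))) • v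
          + ε ^ (N + 1) • (l σ - l (σ + ω)) := by module
      _ = _ := by
        rw [h1, h4, h3]
        module

theorem bounded_of_periodic {n : ℕ} (S : ℝ × (Fin (n+1) → ℝ) → ℝ) (hS : Continuous S)
    (hper : ∀ ε σ k, S (ε, σ + intVec k) = S (ε, σ)) :
    ∃ C, ∀ ε : ℝ, 0 ≤ ε → ε ≤ 1 → ∀ σ, ‖S (ε, σ)‖ ≤ C := by
  obtain ⟨C, hC⟩ := ((isCompact_Icc (a := (0:ℝ)) (b := 1)).prod
    (isCompact_Icc (a := (0 : Fin (n+1) → ℝ)) (b := 1))).exists_bound_of_continuousOn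
    hS.continuousOn
  refine ⟨C, fun ε h0 h1 σ => ?_⟩
  have : σ = (fun i => Int.fract (σ i)) + intVec (fun i => ⌊σ i⌋) := by
    ext i
    simp [intVec]
  rw [this, hper]
  exact hC _ ⟨⟨h0, h1⟩, fun i => Int.fract_nonneg _, fun i => (Int.fract_lt_one _).le⟩

/-- Iterating the inductive step yields the coefficients, with every truncation approximately
invariant. -/
theorem lindstedt_aux {n : ℕ} {ν τ : ℝ} (hν : 0 < ν) (hτ : 0 < τ) {ω : Fin (n+1) → ℝ}
    (hdio : ∀ k : Fin (n+1) → ℤ, k ≠ 0 → ∀ m : ℤ,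
      ν * (∑ i, |(k i : ℝ)|) ^ (-τ) ≤ |(∑ i, (k i : ℝ) * ω i) - (m : ℝ)|)
    (v : (Fin (n+1) → ℝ) × ℝ) {g : (Fin (n+1) → ℝ) × ℝ → ℝ} (hg : ContDiff ℝ (⊤ : ℕ∞) g)
    (hgper : ∀ p k, g (p + (intVec k, 0)) = g p) {y₀ : ℝ}
    (havg : (∫ σ in Set.Icc (0 : Fin (n+1) → ℝ) 1, g (σ, y₀)) = 0)
    (hnd : (∫ σ in Set.Icc (0 : Fin (n+1) → ℝ) 1, deriv (fun y => g (σ, y)) y₀) ≠ 0) :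
    ∃ l : ℕ → (Fin (n+1) → ℝ) → (Fin (n+1) → ℝ) × ℝ,
      (∀ j, ContDiff ℝ (⊤ : ℕ∞) (l j)) ∧ (∀ σ, l 0 σ = (σ, y₀)) ∧
      (∀ j, 1 ≤ j → ∀ σ k, l j (σ + intVec k) = l j σ) ∧
      (∀ N, ∃ S, ApproxInvariant ω v g y₀ N
        (fun p => ∑ j ∈ Finset.range (N + 1), p.1 ^ j • l j p.2) S) := by
  let State := fun N : ℕ => {q : (ℝ × (Fin (n+1) → ℝ) → (Fin (n+1) → ℝ) × ℝ) ×
    (ℝ × (Fin (n+1) → ℝ) → ℝ) // ApproxInvariant ω v g y₀ N q.1 q.2}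
  have hstep : ∀ (N : ℕ) (s : State N), ∃ (l : (Fin (n+1) → ℝ) → (Fin (n+1) → ℝ) × ℝ)
      (S' : ℝ × (Fin (n+1) → ℝ) → ℝ),
      ContDiff ℝ (⊤ : ℕ∞) l ∧ (∀ σ k, l (σ + intVec k) = l σ) ∧
      ApproxInvariant ω v g y₀ (N + 1) (fun p => s.1.1 p + p.1 ^ (N + 1) • l p.2) S' :=
    fun N s => s.2.step hν hτ hdio hg hgper hnd
  choose lnext Snext hl1 hl2 hl3 using hstep
  have h0 : ApproxInvariant ω v g y₀ 0 (fun p => (p.2, y₀)) (fun p => g (p.2, y₀)) := by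
    constructor
    · exact contDiff_snd.prodMk contDiff_const
    · exact hg.comp (contDiff_snd.prodMk contDiff_const)
    · intro ε σ k; simp
    · intro ε σ k
      simpa using hgper (σ, y₀) k
    · exact havg
    · intro σ; rfl
    · intro ε σ; simp
  let st : ∀ N, State N := fun N =>
    Nat.rec (motive := State) ⟨(_, _), h0⟩ (fun N s => ⟨(_, _), hl3 N s⟩) N
  let l : ℕ → (Fin (n+1) → ℝ) → (Fin (n+1) → ℝ) × ℝ := fun j =>
    Nat.casesOn j (fun σ => (σ, y₀)) (fun i => lnext i (st i))
  have hst : ∀ N, (st N).1.1 = fun p => ∑ j ∈ Finset.range (N + 1), p.1 ^ j • l j p.2 := by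
    intro N
    induction N with
    | zero => funext p; simp [st, l]
    | succ N ih =>
      funext p
      change (st N).1.1 p + p.1 ^ (N + 1) • lnext N (st N) p.2 = _
      rw [Finset.sum_range_succ, ih]
  refine ⟨l, ?_, fun σ => rfl, ?_, fun N => ⟨(st N).1.2, hst N ▸ (st N).2⟩⟩
  · rintro (_ | j)
    · exact contDiff_id.prodMk contDiff_const
    · exact hl1 j (st j)
  · rintro (_ | j) hj σ k
    · omega
    · exact hl2 j (st j) σ k

/-- Lindstedt series for the resonant invariant surface of a foliation
preserving torus map.  In the adapted coordinates, with Diophantine intrinsic frequency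
`ω` and nondegenerate data `g, y₀`, there are smooth Lindstedt coefficients `l_j`
(`l_0(σ) = (σ, y₀)`, `l_j` periodic for `j ≥ 1`) such that each truncation satisfies
the invariance equation `F_ε ∘ l^{≤N} = l^{≤N} ∘ (·+ω)` up to `O(ε^{N+1})`; the
internal dynamics is the unperturbed rotation to all orders. -/
theorem lindstedt_series_foliation_preserving
    (d : ℕ) (hd : 2 ≤ d) (ν τ : ℝ) (hν : 0 < ν) (hτ : 0 < τ)
    (ω : Fin (d - 1) → ℝ)
    (hdio : ∀ k : Fin (d - 1) → ℤ, k ≠ 0 → ∀ n : ℤ,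
      ν * (∑ i, |(k i : ℝ)|) ^ (-τ) ≤ |(∑ i, (k i : ℝ) * ω i) - (n : ℝ)|)
    (L₁ : Fin (d - 1) → ℤ) (L₂ : ℤ)
    (g : ((Fin (d - 1) → ℝ) × ℝ) → ℝ) (hg : ContDiff ℝ (⊤ : ℕ∞) g)
    (hgper : ∀ (x : Fin (d - 1) → ℝ) (y : ℝ) (k : Fin (d - 1) → ℤ) (m : ℤ),
      g (x + fun i => (k i : ℝ), y + (m : ℝ)) = g (x, y))
    (y₀ : ℝ)
    (havg : (∫ σ in Set.Icc (0 : Fin (d - 1) → ℝ) 1, g (σ, y₀)) = 0)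
    (hnd : (∫ σ in Set.Icc (0 : Fin (d - 1) → ℝ) 1, deriv (fun y => g (σ, y)) y₀) ≠ 0)
    (F : ℝ → ((Fin (d - 1) → ℝ) × ℝ) → ((Fin (d - 1) → ℝ) × ℝ))
    (hF : ∀ (ε : ℝ) (x : Fin (d - 1) → ℝ) (y : ℝ), F ε (x, y) =
      (x + ω + (ε * g (x, y)) • (ω + fun i => (L₁ i : ℝ)),
        y + ε * (L₂ : ℝ) * g (x, y))) :
    ∃ l : ℕ → (Fin (d - 1) → ℝ) → ((Fin (d - 1) → ℝ) × ℝ),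
      (∀ j, ContDiff ℝ (⊤ : ℕ∞) (l j)) ∧
      (∀ σ, l 0 σ = (σ, y₀)) ∧
      (∀ j, 1 ≤ j → ∀ (σ : Fin (d - 1) → ℝ) (k : Fin (d - 1) → ℤ),
        l j (σ + fun i => (k i : ℝ)) = l j σ) ∧
      (∀ N : ℕ, ∃ C : ℝ, ∀ ε : ℝ, 0 < ε → ε ≤ 1 → ∀ σ : Fin (d - 1) → ℝ,
        ‖F ε (∑ j ∈ Finset.range (N + 1), ε ^ j • l j σ) -
            ∑ j ∈ Finset.range (N + 1), ε ^ j • l j (σ + ω)‖ ≤ C * ε ^ (N + 1)) := by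
  obtain ⟨n, hn⟩ : ∃ n, d - 1 = n + 1 := ⟨d - 2, by omega⟩
  generalize d - 1 = s at *
  subst hn
  -- Both components of `F ε p - p - (ω, 0)` are multiples of the single scalar `ε * g p`.
  set v : (Fin (n+1) → ℝ) × ℝ := (ω + fun i => (L₁ i : ℝ), (L₂ : ℝ)) with hv
  have hgper' : ∀ p k, g (p + (intVec k, 0)) = g p := by
    rintro ⟨x, y⟩ k
    have h := hgper x y k 0
    rw [Int.cast_zero] at h
    exact h
  obtain ⟨l, hl1, hl2, hl3, hl4⟩ := lindstedt_aux hν hτ hdio v hg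
    hgper' havg hnd
  refine ⟨l, hl1, hl2, hl3, fun N => ?_⟩
  obtain ⟨S, hS⟩ := hl4 N
  obtain ⟨C, hC⟩ := bounded_of_periodic S hS.smooth_S.continuous hS.per_S
  refine ⟨C * ‖v‖, fun ε h0 h1 σ => ?_⟩
  have hFv : ∀ p, F ε p = p + (ω, 0) + (ε * g p) • v := by
    rintro ⟨x, y⟩
    rw [hF, hv]
    ext
    · simp
    · simp; ring
  rw [hFv]
  have h2 := hS.eqn ε σ
  simp only at h2
  rw [h2, norm_smul, norm_mul, norm_pow, Real.norm_of_nonneg h0.le]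
  calc ε ^ (N + 1) * ‖S (ε, σ)‖ * ‖v‖ ≤ ε ^ (N + 1) * C * ‖v‖ := by
        gcongr
        exact hC ε h0.le h1 σ
    _ = _ := by ring
end
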